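/- arXiv:2011.05006 — 3 statements merged into one kernel-verified Lean document; each statement's English description precedes it below -/
import Mathlib

section
/- For all real numbers q, z with 0 < q < 1 and z > 0, one has 2·(1+q²)·S_odd(q⁴, q+q⁻¹)·Σ_{ℓ∈ℤ} q^{(2ℓ)²} z^{2ℓ} = Π_{i≥1} (1 + q^{2i−1}z)(1 + q^{2i−1}z⁻¹) + Π_{i≥1} (1 − q^{2i−1}z)(1 − q^{2i−1}z⁻¹), where the sum over ℓ and the infinite products converge absolutely. (Note that 0 < q⁴ < 1 and q+q⁻¹ ≥ 1, so S_odd(q⁴, q+q⁻¹) is defined.) -/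
/-!
By the Jacobi triple product, the two infinite products at `z` and `-z` are theta series divided by
`(q²; q²)_∞`, and adding them keeps only the even exponents. The identity therefore reduces to
`(1 + q²) · S_odd(q⁴, q + 1/q) = 1 / (q²; q²)_∞` (`Sodd_eq`).

*Triple product* (`jacobi_triple`). The finite product over `i < N` is a Laurent polynomial whose
coefficients are Gaussian binomials times `q^{n²}` (`hasSum_jcoeff`, by induction on `N`, with
`1 / (x; x)_k = 0` for `k < 0` so that no boundary terms appear). Let `N → ∞` by dominated
convergence.

*The sum `S_odd`.* Restrict to sequences that equal the ground state `1, 0, 1, 0, …` from place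
`2N` on. The summand is a product over places and the constraint couples only neighbours, so the
restricted sum is computed by a two-state transfer matrix, the state recording whether the last
entry vanishes. With `x = q²`, so that `y = q⁴ = x²` and `t² = (1 + x)² / x`, the two components
after `2N` steps are `x^{2N} / (x; x)_{2N}` and `(1 - x^{2N}) / ((1 + x) (x; x)_{2N})`
(`hasSum_transfer`). The restricted sums increase to `S_odd`, which gives the limit
`1 / ((1 + x) (x; x)_∞)`.
-/

open scoped BigOperators

/-- `He` is the set of sequences `(ω_{-i})_{i ≥ 1}` of non-negative integers (indexed here by
`n : ℕ` with `i = n + 1`) with no two consecutive vanishing entries, agreeing for large `i`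
with the sequence which is `1` at even `i` and `0` at odd `i`. -/
def He : Set (ℕ → ℕ) :=
  {ω | (∀ n : ℕ, ¬(ω n = 0 ∧ ω (n + 1) = 0)) ∧
       (∃ N : ℕ, ∀ n ≥ N, ω n = if (n + 1) % 2 = 0 then 1 else 0)}

/-- `Ho` is as `He`, but agreeing for large `i` with the sequence which is `1` at odd `i`
and `0` at even `i`. -/
def Ho : Set (ℕ → ℕ) :=
  {ω | (∀ n : ℕ, ¬(ω n = 0 ∧ ω (n + 1) = 0)) ∧
       (∃ N : ℕ, ∀ n ≥ N, ω n = if (n + 1) % 2 = 1 then 1 else 0)}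

/-- `A(ω) = Σ_{i odd} i·ω_{-i} + Σ_{i even} i·(ω_{-i} − 1)`. -/
noncomputable def Afun (ω : ℕ → ℕ) : ℤ :=
  ∑ᶠ n : ℕ, (if (n + 1) % 2 = 1 then ((n : ℤ) + 1) * (ω n : ℤ)
             else ((n : ℤ) + 1) * ((ω n : ℤ) - 1))

/-- `B(ω) = 2·(Σ_{i odd} 1{ω_{-i} ≥ 1} − Σ_{i even} 1{ω_{-i} = 0})`. -/
noncomputable def Bfun (ω : ℕ → ℕ) : ℤ :=
  2 * ((∑ᶠ n : ℕ, if (n + 1) % 2 = 1 ∧ 1 ≤ ω n then (1 : ℤ) else 0)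
     - (∑ᶠ n : ℕ, if (n + 1) % 2 = 0 ∧ ω n = 0 then (1 : ℤ) else 0))

/-- `A'(ω) = Σ_{i even} i·ω_{-i} + Σ_{i odd} i·(ω_{-i} − 1)`. -/
noncomputable def A'fun (ω : ℕ → ℕ) : ℤ :=
  ∑ᶠ n : ℕ, (if (n + 1) % 2 = 0 then ((n : ℤ) + 1) * (ω n : ℤ)
             else ((n : ℤ) + 1) * ((ω n : ℤ) - 1))

/-- `B'(ω) = 2·(Σ_{i even} 1{ω_{-i} ≥ 1} − Σ_{i odd} 1{ω_{-i} = 0})`. -/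
noncomputable def B'fun (ω : ℕ → ℕ) : ℤ :=
  2 * ((∑ᶠ n : ℕ, if (n + 1) % 2 = 0 ∧ 1 ≤ ω n then (1 : ℤ) else 0)
     - (∑ᶠ n : ℕ, if (n + 1) % 2 = 1 ∧ ω n = 0 then (1 : ℤ) else 0))

/-- `S_even(q̃, t) = Σ_{ω ∈ H_e} q̃^{A(ω)} t^{B(ω)}`. -/
noncomputable def Seven (q t : ℝ) : ℝ := ∑' ω : He, q ^ Afun ω.1 * t ^ Bfun ω.1

/-- `S_odd(q̃, t) = Σ_{ω ∈ H_o} q̃^{A'(ω)} t^{B'(ω)}`. -/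
noncomputable def Sodd (q t : ℝ) : ℝ := ∑' ω : Ho, q ^ A'fun ω.1 * t ^ B'fun ω.1

open Filter Topology

/-! ### Pochhammer symbols -/

/-- The finite Pochhammer symbol `(x; x)_n = ∏_{i=1}^n (1 - x^i)`. -/
noncomputable def poch (x : ℝ) (n : ℕ) : ℝ := ∏ i ∈ Finset.range n, (1 - x ^ (i + 1))

/-- `1 / (x; x)_k` for `k : ℤ`, with the usual convention that it vanishes for `k < 0`. -/
noncomputable def recPoch (x : ℝ) (k : ℤ) : ℝ := if k < 0 then 0 else (poch x k.toNat)⁻¹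

lemma poch_succ (x : ℝ) (n : ℕ) : poch x (n + 1) = poch x n * (1 - x ^ (n + 1)) := by
  simp [poch, Finset.prod_range_succ]

lemma one_sub_pow_pos {x : ℝ} (hx0 : 0 < x) (hx1 : x < 1) (n : ℕ) : 0 < 1 - x ^ (n + 1) := by
  have := pow_lt_one₀ hx0.le hx1 (Nat.succ_ne_zero n)
  simpa using this

lemma poch_pos {x : ℝ} (hx0 : 0 < x) (hx1 : x < 1) (n : ℕ) : 0 < poch x n :=
  Finset.prod_pos fun i _ => one_sub_pow_pos hx0 hx1 i

lemma poch_le_one {x : ℝ} (hx0 : 0 < x) (hx1 : x < 1) (n : ℕ) : poch x n ≤ 1 :=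
  Finset.prod_le_one (fun i _ => (one_sub_pow_pos hx0 hx1 i).le)
    fun i _ => by have := pow_pos hx0 (i + 1); linarith

lemma poch_antitone {x : ℝ} (hx0 : 0 < x) (hx1 : x < 1) : Antitone (poch x) := by
  refine antitone_nat_of_succ_le fun n => ?_
  rw [poch_succ]
  have h1 := poch_pos hx0 hx1 n
  have h2 := pow_pos hx0 (n + 1)
  nlinarith

/-- `(x; x)_n` converges to a nonzero limit `(x; x)_∞`. -/
lemma exists_tendsto_poch {x : ℝ} (hx0 : 0 < x) (hx1 : x < 1) :
    ∃ L : ℝ, 0 < L ∧ Tendsto (poch x) atTop (𝓝 L) := by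
  have hs : Summable fun n : ℕ => ‖-x ^ (n + 1)‖ := by
    have := (summable_nat_add_iff 1).mpr (summable_geometric_of_lt_one hx0.le hx1)
    simpa [abs_of_pos hx0] using this
  have hm := multipliable_one_add_of_summable hs
  have hne : ∏' n : ℕ, (1 + -x ^ (n + 1)) ≠ 0 :=
    tprod_one_add_ne_zero_of_summable
      (fun n => by have := one_sub_pow_pos hx0 hx1 n; linarith) hs
  have ht : Tendsto (poch x) atTop (𝓝 (∏' n : ℕ, (1 + -x ^ (n + 1)))) := by
    refine hm.hasProd.tendsto_prod_nat.congr fun n => ?_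
    simp [poch, sub_eq_add_neg]
  exact ⟨_, lt_of_le_of_ne (ge_of_tendsto' ht fun n => (poch_pos hx0 hx1 n).le) hne.symm, ht⟩

/-- The recursion of `1 / (x; x)_k` holds at every integer; at `k = 0` it says
`1 / (x; x)_{-1} = 0`. -/
lemma recPoch_pred {x : ℝ} (hx0 : 0 < x) (hx1 : x < 1) (k : ℤ) :
    recPoch x (k - 1) = (1 - x ^ k) * recPoch x k := by
  rcases lt_trichotomy k 0 with h | rfl | h
  · simp [recPoch, h, show k - 1 < 0 by omega]
  · simp [recPoch]
  · obtain ⟨n, rfl⟩ : ∃ n : ℕ, k = n + 1 := ⟨(k - 1).toNat, by omega⟩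
    have h1 := poch_pos hx0 hx1 n
    have h2 := one_sub_pow_pos hx0 hx1 n
    have e1 : recPoch x ((n : ℤ) + 1 - 1) = (poch x n)⁻¹ := by simp [recPoch]
    have e2 : recPoch x ((n : ℤ) + 1) = (poch x (n + 1))⁻¹ := by
      rw [recPoch, if_neg (by omega)]; rfl
    have e3 : x ^ ((n : ℤ) + 1) = x ^ (n + 1) := by norm_cast
    rw [e1, e2, e3, poch_succ]
    field_simp

lemma recPoch_nonneg {x : ℝ} (hx0 : 0 < x) (hx1 : x < 1) (k : ℤ) : 0 ≤ recPoch x k := by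
  unfold recPoch
  split_ifs
  · exact le_rfl
  · exact (inv_pos.mpr (poch_pos hx0 hx1 _)).le

/-! ### The Jacobi triple product -/

/-- The coefficient of `z^n` in `∏_{i<N} (1 + q^{2i+1} z)(1 + q^{2i+1} / z)`, namely
`q^{n²}` times the Gaussian binomial coefficient `[2N, N + n]` in base `q²`. -/
noncomputable def jcoeff (q : ℝ) (N : ℕ) (n : ℤ) : ℝ :=
  poch (q ^ 2) (2 * N) * recPoch (q ^ 2) (N - n) * recPoch (q ^ 2) (N + n) * q ^ (n ^ 2)

lemma jcoeff_succ {q : ℝ} (hq0 : 0 < q) (hq1 : q < 1) (N : ℕ) (n : ℤ) :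
    jcoeff q (N + 1) n = (1 + q ^ (4 * N + 2)) * jcoeff q N n
      + q ^ (2 * N + 1) * (jcoeff q N (n - 1) + jcoeff q N (n + 1)) := by
  have hx0 : 0 < q ^ 2 := by positivity
  have hx1 : q ^ 2 < 1 := pow_lt_one₀ hq0.le hq1 two_ne_zero
  have hq : q ≠ 0 := hq0.ne'
  set α := recPoch (q ^ 2) (N + 1 - n) with hα
  set β := recPoch (q ^ 2) (N + 1 + n) with hβ
  set u := q ^ (2 * ((N : ℤ) + 1 - n)) with hu
  set v := q ^ (2 * ((N : ℤ) + 1 + n)) with hv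
  have pu : (q ^ 2) ^ ((N : ℤ) + 1 - n) = u := by
    rw [hu, zpow_mul]; norm_cast
  have pv : (q ^ 2) ^ ((N : ℤ) + 1 + n) = v := by
    rw [hv, zpow_mul]; norm_cast
  have pu' : (q ^ 2) ^ ((N : ℤ) - n) = u / q ^ 2 := by
    rw [← pu, show (N : ℤ) + 1 - n = (N - n) + 1 by ring, zpow_add_one₀ hx0.ne']
    field_simp
  have pv' : (q ^ 2) ^ ((N : ℤ) + n) = v / q ^ 2 := by
    rw [← pv, show (N : ℤ) + 1 + n = (N + n) + 1 by ring, zpow_add_one₀ hx0.ne']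
    field_simp
  have r1 : recPoch (q ^ 2) (N - n) = (1 - u) * α := by
    rw [show (N : ℤ) - n = (N + 1 - n) - 1 by ring, recPoch_pred hx0 hx1, pu]
  have r2 : recPoch (q ^ 2) (N + n) = (1 - v) * β := by
    rw [show (N : ℤ) + n = (N + 1 + n) - 1 by ring, recPoch_pred hx0 hx1, pv]
  have r3 : recPoch (q ^ 2) (N - (n - 1)) = α := by
    rw [hα]; congr 1; ring
  have r4 : recPoch (q ^ 2) (N + (n + 1)) = β := by
    rw [hβ]; congr 1; ring
  have r5 : recPoch (q ^ 2) (N + (n - 1)) = (1 - v / q ^ 2) * ((1 - v) * β) := by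
    rw [show (N : ℤ) + (n - 1) = (N + n) - 1 by ring, recPoch_pred hx0 hx1, r2, pv']
  have r6 : recPoch (q ^ 2) (N - (n + 1)) = (1 - u / q ^ 2) * ((1 - u) * α) := by
    rw [show (N : ℤ) - (n + 1) = (N - n) - 1 by ring, recPoch_pred hx0 hx1, r1, pu']
  have e1 : q ^ (2 * N + 1) * q ^ ((n - 1) ^ 2) = u * q ^ (n ^ 2) := by
    rw [hu, ← zpow_natCast, ← zpow_add₀ hq, ← zpow_add₀ hq]
    congr 1; push_cast; ring
  have e2 : q ^ (2 * N + 1) * q ^ ((n + 1) ^ 2) = v * q ^ (n ^ 2) := by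
    rw [hv, ← zpow_natCast, ← zpow_add₀ hq, ← zpow_add₀ hq]
    congr 1; push_cast; ring
  have e3 : q ^ (4 * N + 2) = u * v / q ^ 2 := by
    rw [eq_div_iff hx0.ne', hu, hv, ← zpow_add₀ hq, ← pow_add, ← zpow_natCast]
    congr 1; push_cast; ring
  have e4 : poch (q ^ 2) (2 * (N + 1))
      = poch (q ^ 2) (2 * N) * (1 - u * v / q ^ 2) * (1 - u * v) := by
    rw [show 2 * (N + 1) = 2 * N + 1 + 1 by ring, poch_succ, poch_succ, ← e3, ← pow_mul,
      ← pow_mul, show 2 * (2 * N + 1) = 4 * N + 2 by ring]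
    congr 2
    have : u * v = q ^ (4 * N + 2) * q ^ 2 := by rw [e3]; field_simp
    rw [this]; ring
  have L : jcoeff q (N + 1) n = poch (q ^ 2) (2 * N) * (1 - u * v / q ^ 2) * (1 - u * v)
      * α * β * q ^ (n ^ 2) := by
    simp only [jcoeff, e4]; push_cast; rw [← hα, ← hβ]
  have M : q ^ (2 * N + 1) * (jcoeff q N (n - 1) + jcoeff q N (n + 1))
      = poch (q ^ 2) (2 * N) * α * β * ((1 - v / q ^ 2) * (1 - v) * (u * q ^ (n ^ 2))
        + (1 - u / q ^ 2) * (1 - u) * (v * q ^ (n ^ 2))) := by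
    rw [← e1, ← e2]; simp only [jcoeff, r3, r4, r5, r6]; ring
  rw [L, M, e3, jcoeff, r1, r2]
  field_simp
  ring

/-- Finite form of the Jacobi triple product. -/
lemma hasSum_jcoeff {q z : ℝ} (hq0 : 0 < q) (hq1 : q < 1) (hz : z ≠ 0) (N : ℕ) :
    HasSum (fun n : ℤ => jcoeff q N n * z ^ n)
      (∏ i ∈ Finset.range N, (1 + q ^ (2 * i + 1) * z) * (1 + q ^ (2 * i + 1) * z⁻¹)) := by
  induction N with
  | zero =>
    have h : ∀ n : ℤ, n ≠ 0 → jcoeff q 0 n * z ^ n = 0 := by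
      intro n hn
      rcases lt_or_gt_of_ne hn with h | h
      · simp [jcoeff, recPoch, h]
      · simp [jcoeff, recPoch, h]
    have := hasSum_single (f := fun n : ℤ => jcoeff q 0 n * z ^ n) 0 h
    simpa [jcoeff, recPoch, poch] using this
  | succ N ih =>
    have s1 := (Equiv.subRight (1 : ℤ)).hasSum_iff.mpr ih
    have s2 := (Equiv.addRight (1 : ℤ)).hasSum_iff.mpr ih
    have key := ((ih.mul_left (1 + q ^ (4 * N + 2))).add
      (s1.mul_left (q ^ (2 * N + 1) * z))).add (s2.mul_left (q ^ (2 * N + 1) * z⁻¹))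
    convert key using 1
    · rfl
    · funext n
      simp only [Function.comp, Equiv.subRight_apply, Equiv.coe_addRight, jcoeff_succ hq0 hq1]
      rw [zpow_sub_one₀ hz, zpow_add_one₀ hz]
      field_simp
      ring
    · rw [Finset.prod_range_succ]
      generalize ∏ i ∈ Finset.range N, (1 + q ^ (2 * i + 1) * z) * (1 + q ^ (2 * i + 1) * z⁻¹) = P
      field_simp
      ring

lemma summable_theta_nat {q z : ℝ} (hq0 : 0 < q) (hq1 : q < 1) :
    Summable fun n : ℕ => q ^ (n ^ 2) * z ^ n := by
  have ht : Tendsto (fun n : ℕ => ‖q ^ n * z‖) atTop (𝓝 0) := by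
    have := ((tendsto_pow_atTop_nhds_zero_of_lt_one hq0.le hq1).mul_const z).norm
    simpa using this
  have hev := ht.eventually_le_const (show (0 : ℝ) < 1 / 2 by norm_num)
  refine Summable.of_norm_bounded_eventually_nat
    (summable_geometric_of_lt_one (r := 1 / 2) (by norm_num) (by norm_num)) ?_
  filter_upwards [hev] with n hn
  rw [sq, pow_mul, ← mul_pow, norm_pow]
  exact pow_le_pow_left₀ (norm_nonneg _) hn n

lemma summable_theta {q z : ℝ} (hq0 : 0 < q) (hq1 : q < 1) :
    Summable fun n : ℤ => q ^ (n ^ 2) * z ^ n := by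
  refine Summable.of_nat_of_neg ?_ ?_
  · refine (summable_theta_nat (z := z) hq0 hq1).congr fun n => ?_
    norm_cast
  · refine (summable_theta_nat (z := z⁻¹) hq0 hq1).congr fun n => ?_
    rw [neg_sq, zpow_neg, inv_pow]
    norm_cast

lemma tendsto_recPoch {x L : ℝ} (hL : 0 < L) (h : Tendsto (poch x) atTop (𝓝 L)) (f : ℕ → ℤ)
    (hf : Tendsto f atTop atTop) : Tendsto (fun N => recPoch x (f N)) atTop (𝓝 L⁻¹) := by
  have h1 : Tendsto (fun N => (f N).toNat) atTop atTop := by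
    rw [tendsto_atTop] at hf ⊢
    intro b
    filter_upwards [hf b] with N hN
    omega
  refine ((h.comp h1).inv₀ hL.ne').congr' ?_
  filter_upwards [hf.eventually_ge_atTop 0] with N hN
  simp [recPoch, not_lt.mpr hN]

lemma multipliable_triple (q z : ℝ) (hq0 : 0 < q) (hq1 : q < 1) :
    Multipliable (fun i : ℕ => (1 + q ^ (2 * i + 1) * z) * (1 + q ^ (2 * i + 1) * z⁻¹)) := by
  have hs : ∀ w : ℝ, Summable fun i : ℕ => q ^ (2 * i + 1) * w := by
    intro w
    have hx1 : q ^ 2 < 1 := pow_lt_one₀ hq0.le hq1 two_ne_zero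
    have := (summable_geometric_of_lt_one (by positivity) hx1).mul_left q
    refine (this.mul_right w).congr fun i => ?_
    rw [pow_succ q (2 * i), pow_mul]; ring
  have := fun w => Real.multipliable_one_add_of_summable (hs w)
  exact (this z).mul (this z⁻¹)

/-- The Jacobi triple product, with `L = (q²; q²)_∞`. -/
lemma jacobi_triple {q z L : ℝ} (hq0 : 0 < q) (hq1 : q < 1) (hz : z ≠ 0) (hL : 0 < L)
    (h : Tendsto (poch (q ^ 2)) atTop (𝓝 L)) :
    ∏' i : ℕ, (1 + q ^ (2 * i + 1) * z) * (1 + q ^ (2 * i + 1) * z⁻¹)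
      = L⁻¹ * ∑' n : ℤ, q ^ (n ^ 2) * z ^ n := by
  have hx0 : 0 < q ^ 2 := by positivity
  have hx1 : q ^ 2 < 1 := pow_lt_one₀ hq0.le hq1 two_ne_zero
  have hle : ∀ k, recPoch (q ^ 2) k ≤ L⁻¹ := by
    intro k
    unfold recPoch
    split_ifs
    · positivity
    · exact inv_anti₀ hL ((poch_antitone hx0 hx1).le_of_tendsto h _)
  have t1 := (multipliable_triple q z hq0 hq1).hasProd.tendsto_prod_nat
  have t2 : Tendsto (fun N => ∑' n : ℤ, jcoeff q N n * z ^ n) atTop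
      (𝓝 (∑' n : ℤ, L⁻¹ * (q ^ (n ^ 2) * z ^ n))) := by
    refine tendsto_tsum_of_dominated_convergence
      (bound := fun n : ℤ => L⁻¹ * L⁻¹ * (q ^ (n ^ 2) * |z| ^ n))
      ((summable_theta hq0 hq1).mul_left _) ?_ ?_
    · intro n
      have a1 : Tendsto (fun N : ℕ => poch (q ^ 2) (2 * N)) atTop (𝓝 L) :=
        h.comp (tendsto_id.const_mul_atTop' two_pos)
      have a2 := tendsto_recPoch hL h (fun N : ℕ => (N : ℤ) - n)
        (tendsto_atTop_add_const_right _ (-n) tendsto_natCast_atTop_atTop)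
      have a3 := tendsto_recPoch hL h (fun N : ℕ => (N : ℤ) + n)
        (tendsto_atTop_add_const_right _ n tendsto_natCast_atTop_atTop)
      have := (((a1.mul a2).mul a3).mul_const (q ^ (n ^ 2))).mul_const (z ^ n)
      rw [mul_inv_cancel₀ hL.ne', one_mul, mul_assoc L⁻¹] at this
      exact this
    · refine Eventually.of_forall fun N n => ?_
      have hp := poch_pos hx0 hx1 (2 * N)
      have hqn : 0 < q ^ (n ^ 2) := zpow_pos hq0 _
      have hr1 := recPoch_nonneg hx0 hx1 ((N : ℤ) - n)
      have hr2 := recPoch_nonneg hx0 hx1 ((N : ℤ) + n)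
      rw [norm_mul, norm_zpow, Real.norm_eq_abs, Real.norm_eq_abs, ← mul_assoc, jcoeff,
        abs_of_nonneg (by positivity)]
      have hb : poch (q ^ 2) (2 * N) * recPoch (q ^ 2) (N - n) * recPoch (q ^ 2) (N + n)
          ≤ 1 * L⁻¹ * L⁻¹ := by
        gcongr
        · exact poch_le_one hx0 hx1 _
        · exact hle _
        · exact hle _
      rw [one_mul] at hb
      gcongr
  have t3 := t2.congr fun N => (hasSum_jcoeff hq0 hq1 hz N).tsum_eq
  rw [tendsto_nhds_unique t1 t3, tsum_mul_left]

/-! ### The transfer matrix for the truncated sums -/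

/-- The contribution to `y^{A'(ω)} t^{B'(ω)}` of an entry `k` of `ω` at (zero-based) place `i`. -/
noncomputable def siteWeight (y t : ℝ) (i k : ℕ) : ℝ :=
  y ^ (if (i + 1) % 2 = 0 then ((i : ℤ) + 1) * (k : ℤ) else ((i : ℤ) + 1) * ((k : ℤ) - 1)) *
    t ^ (2 * ((if (i + 1) % 2 = 0 ∧ 1 ≤ k then (1 : ℤ) else 0)
      - (if (i + 1) % 2 = 1 ∧ k = 0 then (1 : ℤ) else 0)))

/-- The weight of the first `n` entries of `ω`, put into the first component if the last of them
is positive (or `n = 0`) and into the second if it vanishes; both components are `0` if two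
consecutive entries among these `n` vanish. -/
noncomputable def transfer (y t : ℝ) : ℕ → (ℕ → ℕ) → ℝ × ℝ
  | 0, _ => (1, 0)
  | n + 1, ω =>
    if ω n = 0 then (0, (transfer y t n ω).1 * siteWeight y t n 0)
    else (((transfer y t n ω).1 + (transfer y t n ω).2) * siteWeight y t n (ω n), 0)

/-- The sequences which agree with the ground state `1, 0, 1, 0, …` from place `n` on. -/
def groundFrom (n : ℕ) : Set (ℕ → ℕ) := {ω | ∀ i ≥ n, ω i = if (i + 1) % 2 = 1 then 1 else 0}

/-- No two consecutive zeros among the first `n` entries. -/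
def NoZeroPair (n : ℕ) (ω : ℕ → ℕ) : Prop := ∀ i, i + 1 < n → ¬(ω i = 0 ∧ ω (i + 1) = 0)

lemma siteWeight_pos {y t : ℝ} (hy : 0 < y) (ht : 0 < t) (i k : ℕ) : 0 < siteWeight y t i k :=
  mul_pos (zpow_pos hy _) (zpow_pos ht _)

lemma transfer_congr (y t : ℝ) {n : ℕ} {ω ω' : ℕ → ℕ} (h : ∀ i < n, ω i = ω' i) :
    transfer y t n ω = transfer y t n ω' := by
  induction n with
  | zero => rfl
  | succ n ih => simp only [transfer, ih fun i hi => h i (by omega), h n (by omega)]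

lemma transfer_nonneg {y t : ℝ} (hy : 0 < y) (ht : 0 < t) (n : ℕ) (ω : ℕ → ℕ) :
    0 ≤ (transfer y t n ω).1 ∧ 0 ≤ (transfer y t n ω).2 := by
  induction n with
  | zero => simp [transfer]
  | succ n ih =>
    have h0 := siteWeight_pos hy ht n 0
    have h1 := siteWeight_pos hy ht n (ω n)
    obtain ⟨i1, i2⟩ := ih
    simp only [transfer]
    split_ifs
    · exact ⟨le_rfl, by positivity⟩
    · exact ⟨by positivity, le_rfl⟩

open Classical in
lemma transfer_eq (y t : ℝ) (n : ℕ) (ω : ℕ → ℕ) :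
    (transfer y t n ω).1 = (if NoZeroPair n ω ∧ ¬(∃ m, n = m + 1 ∧ ω m = 0)
      then ∏ i ∈ Finset.range n, siteWeight y t i (ω i) else 0) ∧
    (transfer y t n ω).2 = (if NoZeroPair n ω ∧ (∃ m, n = m + 1 ∧ ω m = 0)
      then ∏ i ∈ Finset.range n, siteWeight y t i (ω i) else 0) := by
  induction n with
  | zero => simp [transfer, NoZeroPair]
  | succ n ih =>
    have hZ : (∃ m, n + 1 = m + 1 ∧ ω m = 0) ↔ ω n = 0 :=
      ⟨fun ⟨m, h, h'⟩ => by obtain rfl : n = m := by omega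
                            exact h', fun h => ⟨n, rfl, h⟩⟩
    have hO : NoZeroPair (n + 1) ω ↔
        NoZeroPair n ω ∧ ¬((∃ m, n = m + 1 ∧ ω m = 0) ∧ ω n = 0) := by
      constructor
      · refine fun h => ⟨fun i hi => h i (by omega), ?_⟩
        rintro ⟨⟨m, rfl, h1⟩, h2⟩
        exact h m (by omega) ⟨h1, h2⟩
      · rintro ⟨h1, h2⟩ i hi ⟨h3, h4⟩
        rcases Nat.lt_or_ge (i + 1) n with h | h
        · exact h1 i h ⟨h3, h4⟩
        · obtain rfl : n = i + 1 := by omega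
          exact h2 ⟨⟨i, rfl, h3⟩, h4⟩
    rw [hZ, hO, Finset.prod_range_succ]
    simp only [transfer]
    obtain ⟨i1, i2⟩ := ih
    rw [i1, i2]
    generalize (∃ m, n = m + 1 ∧ ω m = 0) = Z
    by_cases h : ω n = 0 <;> by_cases hz : Z <;> by_cases ho : NoZeroPair n ω <;>
      simp [h, hz, ho]

/-- Changing the entry at place `n` identifies `groundFrom n × ℕ` with `groundFrom (n + 1)`. -/
def groundEquiv (n : ℕ) : groundFrom n × ℕ ≃ groundFrom (n + 1) where
  toFun p := ⟨Function.update p.1.1 n p.2, fun i hi => by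
    rw [Function.update_of_ne (by omega)]; exact p.1.2 i (by omega)⟩
  invFun ω := (⟨Function.update ω.1 n (if (n + 1) % 2 = 1 then 1 else 0), fun i hi => by
    rcases eq_or_ne i n with rfl | h
    · simp
    · rw [Function.update_of_ne h]; exact ω.2 i (by omega)⟩, ω.1 n)
  left_inv := by
    rintro ⟨⟨ω, h⟩, k⟩
    simp only [Function.update_self, Function.update_idem, Prod.mk.injEq, Subtype.mk.injEq,
      and_true]
    rw [← h n le_rfl, Function.update_eq_self]
  right_inv := by
    rintro ⟨ω, h⟩
    simp

/-- One step of the transfer-matrix computation. -/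
lemma hasSum_transfer_succ {y t a b c : ℝ} (hy : 0 < y) (ht : 0 < t) {n : ℕ}
    (ha : HasSum (fun ω : groundFrom n => (transfer y t n ω.1).1) a)
    (hb : HasSum (fun ω : groundFrom n => (transfer y t n ω.1).2) b)
    (hc : HasSum (fun k => if k = 0 then 0 else siteWeight y t n k) c) :
    HasSum (fun ω : groundFrom (n + 1) => (transfer y t (n + 1) ω.1).1) ((a + b) * c) ∧
    HasSum (fun ω : groundFrom (n + 1) => (transfer y t (n + 1) ω.1).2)
      (a * siteWeight y t n 0) := by
  have hup : ∀ p : groundFrom n × ℕ,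
      transfer y t n (groundEquiv n p).1 = transfer y t n p.1.1 := fun p =>
    transfer_congr y t fun i hi => Function.update_of_ne (by omega) _ _
  have hself : ∀ p : groundFrom n × ℕ, (groundEquiv n p).1 n = p.2 := fun p =>
    Function.update_self _ _ _
  constructor
  · rw [← (groundEquiv n).hasSum_iff]
    have hab := ha.add hb
    have hs := hab.summable.mul_of_nonneg hc.summable
      (fun ω => add_nonneg (transfer_nonneg hy ht n ω.1).1 (transfer_nonneg hy ht n ω.1).2)
      (fun k => by
        dsimp only
        split_ifs
        exacts [le_rfl, (siteWeight_pos hy ht n k).le])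
    convert hab.mul hc hs using 1
    · rfl
    · funext p
      simp only [Function.comp, transfer, hup, hself]
      split_ifs <;> simp
  · rw [← (groundEquiv n).hasSum_iff]
    have h0 := hasSum_ite_eq (0 : ℕ) (siteWeight y t n 0)
    have hs := ha.summable.mul_of_nonneg h0.summable
      (fun ω => (transfer_nonneg hy ht n ω.1).1)
      (fun k => by
        dsimp only
        split_ifs
        exacts [(siteWeight_pos hy ht n 0).le, le_rfl])
    convert ha.mul h0 hs using 1
    · rfl
    · funext p
      simp only [Function.comp, transfer, hup, hself]
      split_ifs <;> simp

lemma hasSum_of_eq {ι : Type*} {f : ι → ℝ} {a b : ℝ} (h : HasSum f a) (e : a = b) :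
    HasSum f b := e ▸ h

lemma hasSum_of_succ {f : ℕ → ℝ} {c : ℝ} (h0 : f 0 = 0) (h : HasSum (fun k => f (k + 1)) c) :
    HasSum f c := by
  simpa [h0] using (hasSum_nat_add_iff 1).mp h

lemma siteWeight_even_zero (y t : ℝ) (N : ℕ) :
    siteWeight y t (2 * N) 0 = (y ^ (2 * N + 1) * t ^ 2)⁻¹ := by
  have h1 : (2 * N + 1) % 2 = 1 := by omega
  simp only [siteWeight, h1]
  rw [mul_inv, ← zpow_natCast y, ← zpow_natCast t, ← zpow_neg, ← zpow_neg]
  congr 2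
  push_cast
  simp

lemma siteWeight_even_succ (y t : ℝ) (N k : ℕ) :
    siteWeight y t (2 * N) (k + 1) = (y ^ (2 * N + 1)) ^ k := by
  have h1 : (2 * N + 1) % 2 = 1 := by omega
  simp only [siteWeight, h1]
  norm_num
  rw [← pow_mul]
  norm_cast

lemma siteWeight_odd_zero (y t : ℝ) (N : ℕ) : siteWeight y t (2 * N + 1) 0 = 1 := by
  have h1 : (2 * N + 1 + 1) % 2 = 0 := by omega
  simp [siteWeight, h1]

lemma siteWeight_odd_succ (y t : ℝ) (N k : ℕ) :
    siteWeight y t (2 * N + 1) (k + 1) = t ^ 2 * y ^ (2 * N + 2) * (y ^ (2 * N + 2)) ^ k := by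
  have h1 : (2 * N + 1 + 1) % 2 = 0 := by omega
  simp only [siteWeight, h1]
  norm_num
  rw [mul_comm, mul_assoc, ← pow_succ', ← pow_mul]
  congr 1

/-- Closed form of the truncated sums at `y = q⁴`, `t = q + 1/q`. -/
lemma hasSum_transfer {q : ℝ} (hq0 : 0 < q) (hq1 : q < 1) (N : ℕ) :
    HasSum (fun ω : groundFrom (2 * N) => (transfer (q ^ 4) (q + q⁻¹) (2 * N) ω.1).1)
      ((q ^ 2) ^ (2 * N) / poch (q ^ 2) (2 * N)) ∧
    HasSum (fun ω : groundFrom (2 * N) => (transfer (q ^ 4) (q + q⁻¹) (2 * N) ω.1).2)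
      ((1 - (q ^ 2) ^ (2 * N)) / ((1 + q ^ 2) * poch (q ^ 2) (2 * N))) := by
  have hy : 0 < q ^ 4 := by positivity
  have hy1 : q ^ 4 < 1 := pow_lt_one₀ hq0.le hq1 (by norm_num)
  have ht : 0 < q + q⁻¹ := by positivity
  induction N with
  | zero =>
    have : Unique (groundFrom (2 * 0)) :=
      { default := ⟨fun i => if (i + 1) % 2 = 1 then 1 else 0, fun i _ => rfl⟩
        uniq := fun ω => Subtype.ext (funext fun i => ω.2 i (by omega)) }
    constructor
    · convert hasSum_unique (fun ω : groundFrom (2 * 0) =>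
        (transfer (q ^ 4) (q + q⁻¹) (2 * 0) ω.1).1) using 1
      simp [transfer, poch]
    · convert hasSum_unique (fun ω : groundFrom (2 * 0) =>
        (transfer (q ^ 4) (q + q⁻¹) (2 * 0) ω.1).2) using 1
      simp [transfer]
  | succ N ih =>
    obtain ⟨ha, hb⟩ := ih
    have hc1 : HasSum (fun k => if k = 0 then 0 else siteWeight (q ^ 4) (q + q⁻¹) (2 * N) k)
        (1 - (q ^ 4) ^ (2 * N + 1))⁻¹ := by
      refine hasSum_of_succ (by simp) ?_
      simp only [Nat.succ_ne_zero, if_false, siteWeight_even_succ]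
      exact hasSum_geometric_of_lt_one (by positivity) (pow_lt_one₀ hy.le hy1 (by omega))
    have hc2 : HasSum
        (fun k => if k = 0 then 0 else siteWeight (q ^ 4) (q + q⁻¹) (2 * N + 1) k)
        ((q + q⁻¹) ^ 2 * (q ^ 4) ^ (2 * N + 2) * (1 - (q ^ 4) ^ (2 * N + 2))⁻¹) := by
      refine hasSum_of_succ (by simp) ?_
      simp only [Nat.succ_ne_zero, if_false, siteWeight_odd_succ]
      exact (hasSum_geometric_of_lt_one (by positivity)
        (pow_lt_one₀ hy.le hy1 (by omega))).mul_left _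
    obtain ⟨ha1, hb1⟩ := hasSum_transfer_succ hy ht ha hb hc1
    obtain ⟨ha2, hb2⟩ := hasSum_transfer_succ hy ht ha1 hb1 hc2
    rw [siteWeight_even_zero] at ha2
    rw [siteWeight_odd_zero] at hb2
    have hx0 : 0 < q ^ 2 := by positivity
    have hx1 : q ^ 2 < 1 := pow_lt_one₀ hq0.le hq1 two_ne_zero
    have p0 := poch_pos hx0 hx1 (2 * N)
    have e : poch (q ^ 2) (2 * (N + 1))
        = poch (q ^ 2) (2 * N) * (1 - (q ^ 2) ^ (2 * N) * q ^ 2)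
          * (1 - (q ^ 2) ^ (2 * N) * q ^ 4) := by
      rw [show 2 * (N + 1) = 2 * N + 1 + 1 by ring, poch_succ, poch_succ]
      ring
    have d1 := one_sub_pow_pos hx0 hx1 (2 * N)
    have d2 := one_sub_pow_pos hx0 hx1 (2 * N + 1)
    have f1 : (q ^ 4) ^ (2 * N + 1) = ((q ^ 2) ^ (2 * N)) ^ 2 * q ^ 4 := by ring
    have f2 : (q ^ 4) ^ (2 * N + 2) = ((q ^ 2) ^ (2 * N)) ^ 2 * q ^ 8 := by ring
    have f3 : (q ^ 2) ^ (2 * (N + 1)) = (q ^ 2) ^ (2 * N) * q ^ 4 := by ring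
    have f4 : (q ^ 2) ^ (2 * N + 1) = (q ^ 2) ^ (2 * N) * q ^ 2 := by ring
    have f5 : (q ^ 2) ^ (2 * N + 1 + 1) = (q ^ 2) ^ (2 * N) * q ^ 4 := by ring
    have hX : 0 < (q ^ 2) ^ (2 * N) := by positivity
    rw [f1, f2] at ha2
    rw [f1] at hb2
    rw [f4] at d1
    rw [f5] at d2
    rw [e, f3]
    generalize (q ^ 2) ^ (2 * N) = X at *
    generalize poch (q ^ 2) (2 * N) = P at *
    have g1 : 1 - X ^ 2 * q ^ 4 = (1 - X * q ^ 2) * (1 + X * q ^ 2) := by ring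
    have g2 : 1 - X ^ 2 * q ^ 8 = (1 - X * q ^ 4) * (1 + X * q ^ 4) := by ring
    have g3 : q + q⁻¹ = (1 + q ^ 2) / q := by field_simp; ring
    have d3 : 0 < 1 + X * q ^ 2 := by positivity
    have d4 : 0 < 1 + X * q ^ 4 := by positivity
    have d5 : 0 < 1 + q ^ 2 := by positivity
    constructor
    · refine hasSum_of_eq ha2 ?_
      rw [g1, g2]
      simp only [g3]
      field_simp
      ring
    · refine hasSum_of_eq hb2 ?_
      rw [g1]
      field_simp
      ring

/-! ### Evaluation of `S_odd` -/

lemma weight_eq_prod {y t : ℝ} (hy : 0 < y) (ht : 0 < t) {n : ℕ} {ω : ℕ → ℕ}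
    (h : ω ∈ groundFrom n) :
    y ^ A'fun ω * t ^ B'fun ω = ∏ i ∈ Finset.range n, siteWeight y t i (ω i) := by
  have hsupp : ∀ f : ℕ → ℤ, (∀ i ≥ n, f i = 0) → ∑ᶠ i, f i = ∑ i ∈ Finset.range n, f i := by
    intro f hf
    refine finsum_eq_sum_of_support_subset _ fun i hi => ?_
    simp only [Finset.coe_range, Set.mem_Iio]
    by_contra hlt
    exact hi (hf i (by omega))
  have hA : A'fun ω = ∑ i ∈ Finset.range n, (if (i + 1) % 2 = 0 then ((i : ℤ) + 1) * (ω i : ℤ)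
      else ((i : ℤ) + 1) * ((ω i : ℤ) - 1)) := by
    refine hsupp _ fun i hi => ?_
    have := h i hi
    rcases Nat.mod_two_eq_zero_or_one (i + 1) with e | e <;> simp [this, e]
  have hB : B'fun ω = ∑ i ∈ Finset.range n,
      (2 * ((if (i + 1) % 2 = 0 ∧ 1 ≤ ω i then (1 : ℤ) else 0)
      - (if (i + 1) % 2 = 1 ∧ ω i = 0 then (1 : ℤ) else 0))) := by
    rw [B'fun, hsupp, hsupp, ← Finset.sum_sub_distrib, Finset.mul_sum]
    · intro i hi
      have := h i hi
      rcases Nat.mod_two_eq_zero_or_one (i + 1) with e | e <;> simp [this, e]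
    · intro i hi
      have := h i hi
      rcases Nat.mod_two_eq_zero_or_one (i + 1) with e | e <;> simp [this, e]
  rw [hA, hB]
  clear hA hB hsupp h
  induction n with
  | zero => simp
  | succ n ih =>
    rw [Finset.sum_range_succ, Finset.sum_range_succ, Finset.prod_range_succ, ← ih,
      zpow_add₀ hy.ne', zpow_add₀ ht.ne', siteWeight]
    ring

lemma mem_Ho_iff {N : ℕ} {ω : ℕ → ℕ} (h : ω ∈ groundFrom (2 * N)) :
    ω ∈ Ho ↔ NoZeroPair (2 * N) ω := by
  constructor
  · exact fun hω i _ => hω.1 i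
  · refine fun hω => ⟨fun i => ?_, 2 * N, h⟩
    rcases Nat.lt_or_ge (i + 1) (2 * N) with hi | hi
    · exact hω i hi
    · rintro ⟨h1, h2⟩
      have h3 := h (i + 1) hi
      have h4 : (i + 1 + 1) % 2 ≠ 1 := by
        intro h5
        rw [h2, if_pos h5] at h3
        omega
      -- `i + 1` is odd and at least `2 * N`, hence `i ≥ 2 * N` is itself a ground-state place
      have h6 := h i (by omega)
      rw [h1, if_pos (by omega)] at h6
      omega

/-- The truncated transfer-matrix weight, as a function on all sequences. -/
noncomputable def truncWeight (y t : ℝ) (N : ℕ) : (ℕ → ℕ) → ℝ :=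
  (groundFrom (2 * N)).indicator fun ω =>
    (transfer y t (2 * N) ω).1 + (transfer y t (2 * N) ω).2

lemma truncWeight_eq {y t : ℝ} (hy : 0 < y) (ht : 0 < t) {N : ℕ} {ω : ℕ → ℕ}
    (h : ω ∈ groundFrom (2 * N)) :
    truncWeight y t N ω = Ho.indicator (fun ω => y ^ A'fun ω * t ^ B'fun ω) ω := by
  classical
  rw [truncWeight, Set.indicator_of_mem h, (transfer_eq y t _ ω).1, (transfer_eq y t _ ω).2,
    Set.indicator_apply, mem_Ho_iff h, weight_eq_prod hy ht h]
  by_cases h1 : NoZeroPair (2 * N) ω <;> by_cases h2 : ∃ m, 2 * N = m + 1 ∧ ω m = 0 <;>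
    simp only [h1, h2] <;> simp

/-- `(1 + q²) S_odd(q⁴, q + 1/q) = 1 / (q²; q²)_∞`. -/
lemma Sodd_eq {q L : ℝ} (hq0 : 0 < q) (hq1 : q < 1) (hL : 0 < L)
    (h : Tendsto (poch (q ^ 2)) atTop (𝓝 L)) :
    (1 + q ^ 2) * Sodd (q ^ 4) (q + q⁻¹) = L⁻¹ := by
  have hy : 0 < q ^ 4 := by positivity
  have ht : 0 < q + q⁻¹ := by positivity
  have hx0 : 0 < q ^ 2 := by positivity
  have hx1 : q ^ 2 < 1 := pow_lt_one₀ hq0.le hq1 two_ne_zero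
  set F := Ho.indicator fun ω => (q ^ 4) ^ A'fun ω * (q + q⁻¹) ^ B'fun ω with hF
  set s : ℕ → ℝ := fun N => (q ^ 2) ^ (2 * N) / poch (q ^ 2) (2 * N)
    + (1 - (q ^ 2) ^ (2 * N)) / ((1 + q ^ 2) * poch (q ^ 2) (2 * N)) with hs
  have hsum : ∀ N, HasSum (truncWeight (q ^ 4) (q + q⁻¹) N) (s N) := fun N =>
    hasSum_subtype_iff_indicator.mp
      ((hasSum_transfer hq0 hq1 N).1.add (hasSum_transfer hq0 hq1 N).2)
  have hF0 : ∀ ω, 0 ≤ F ω := fun ω => Set.indicator_nonneg (fun ω _ => by positivity) ω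
  have hle : ∀ N ω, truncWeight (q ^ 4) (q + q⁻¹) N ω ≤ F ω := by
    intro N ω
    by_cases hω : ω ∈ groundFrom (2 * N)
    · exact (truncWeight_eq hy ht hω).le
    · rw [truncWeight, Set.indicator_of_notMem hω]
      exact hF0 ω
  have hlim : ∀ ω, Tendsto (fun N => truncWeight (q ^ 4) (q + q⁻¹) N ω) atTop (𝓝 (F ω)) := by
    intro ω
    by_cases hω : ω ∈ Ho
    · obtain ⟨M, hM⟩ := hω.2
      refine tendsto_const_nhds.congr' ?_
      filter_upwards [eventually_ge_atTop M] with N hN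
      exact (truncWeight_eq hy ht fun i hi => hM i (by omega)).symm
    · refine tendsto_const_nhds.congr fun N => ?_
      by_cases hg : ω ∈ groundFrom (2 * N)
      · exact (truncWeight_eq hy ht hg).symm
      · rw [truncWeight, Set.indicator_of_notMem hg, hF, Set.indicator_of_notMem hω]
  have hslim : Tendsto s atTop (𝓝 (0 / L + (1 - 0) / ((1 + q ^ 2) * L))) := by
    have h2 : Tendsto (fun N : ℕ => 2 * N) atTop atTop :=
      tendsto_id.const_mul_atTop' two_pos
    have t1 := (tendsto_pow_atTop_nhds_zero_of_lt_one hx0.le hx1).comp h2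
    have t2 := h.comp h2
    exact (t1.div t2 hL.ne').add
      ((t1.const_sub 1).div (t2.const_mul (1 + q ^ 2)) (by positivity))
  -- partial sums of `F` are limits of partial sums of the truncations, each at most `s N`
  have hbound : ∀ T : Finset (ℕ → ℕ), ∑ ω ∈ T, F ω ≤ 0 / L + (1 - 0) / ((1 + q ^ 2) * L) := by
    intro T
    refine le_of_tendsto_of_tendsto' (tendsto_finsetSum T fun ω _ => hlim ω) hslim fun N => ?_
    refine sum_le_hasSum T (fun ω _ => ?_) (hsum N)
    exact Set.indicator_nonneg (fun ω _ =>
      add_nonneg (transfer_nonneg hy ht _ ω).1 (transfer_nonneg hy ht _ ω).2) ω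
  have hFs : Summable F := summable_of_sum_le hF0 hbound
  have hS : Sodd (q ^ 4) (q + q⁻¹) = ∑' ω, F ω :=
    tsum_subtype Ho fun ω => (q ^ 4) ^ A'fun ω * (q + q⁻¹) ^ B'fun ω
  have hval : ∑' ω, F ω = 0 / L + (1 - 0) / ((1 + q ^ 2) * L) :=
    le_antisymm (hFs.tsum_le_of_sum_le hbound)
      (le_of_tendsto' hslim fun N => hasSum_le (hle N) (hsum N) hFs.hasSum)
  rw [hS, hval]
  field_simp
  ring

/-! ### The identity -/

/-- Adding the theta series at `z` and `-z` leaves twice its even part. -/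
lemma theta_add_theta_neg {q : ℝ} (hq0 : 0 < q) (hq1 : q < 1) (z : ℝ) :
    (∑' n : ℤ, q ^ (n ^ 2) * z ^ n) + (∑' n : ℤ, q ^ (n ^ 2) * (-z) ^ n)
      = 2 * ∑' ℓ : ℤ, q ^ ((2 * ℓ) ^ 2) * z ^ (2 * ℓ) := by
  rw [← (summable_theta hq0 hq1).tsum_add (summable_theta hq0 hq1), ← tsum_mul_left]
  have hinj : Function.Injective fun ℓ : ℤ => 2 * ℓ := fun a b h => by
    simp only at h; omega
  rw [← hinj.tsum_eq]
  · refine tsum_congr fun ℓ => ?_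
    rw [(even_two_mul ℓ).neg_zpow]
    ring
  · intro n hn
    by_contra hodd
    have : Odd n := by
      rw [← Int.not_even_iff_odd]
      rintro ⟨k, rfl⟩
      exact hodd ⟨k, by ring⟩
    exact hn (by simp [this.neg_zpow])

theorem statement4 (q z : ℝ) (hq0 : 0 < q) (hq1 : q < 1) (hz : 0 < z) :
    Summable (fun ℓ : ℤ => q ^ ((2 * ℓ) ^ 2) * z ^ (2 * ℓ)) ∧
    Multipliable (fun i : ℕ => (1 + q ^ (2 * i + 1) * z) * (1 + q ^ (2 * i + 1) * z⁻¹)) ∧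
    Multipliable (fun i : ℕ => (1 - q ^ (2 * i + 1) * z) * (1 - q ^ (2 * i + 1) * z⁻¹)) ∧
    2 * (1 + q ^ 2) * Sodd (q ^ 4) (q + q⁻¹) * (∑' ℓ : ℤ, q ^ ((2 * ℓ) ^ 2) * z ^ (2 * ℓ)) =
      (∏' i : ℕ, (1 + q ^ (2 * i + 1) * z) * (1 + q ^ (2 * i + 1) * z⁻¹)) +
      (∏' i : ℕ, (1 - q ^ (2 * i + 1) * z) * (1 - q ^ (2 * i + 1) * z⁻¹)) := by
  have hneg : (fun i : ℕ => (1 - q ^ (2 * i + 1) * z) * (1 - q ^ (2 * i + 1) * z⁻¹))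
      = fun i : ℕ => (1 + q ^ (2 * i + 1) * (-z)) * (1 + q ^ (2 * i + 1) * (-z)⁻¹) := by
    funext i
    rw [inv_neg]
    ring
  have hx0 : 0 < q ^ 2 := by positivity
  have hx1 : q ^ 2 < 1 := pow_lt_one₀ hq0.le hq1 two_ne_zero
  obtain ⟨L, hL, hlim⟩ := exists_tendsto_poch hx0 hx1
  refine ⟨?_, multipliable_triple q z hq0 hq1, ?_, ?_⟩
  · exact (summable_theta (z := z) hq0 hq1).comp_injective
      (i := fun ℓ : ℤ => 2 * ℓ) fun a b h => by simp only at h; omega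
  · rw [hneg]
    exact multipliable_triple q (-z) hq0 hq1
  · rw [hneg, jacobi_triple hq0 hq1 hz.ne' hL hlim,
      jacobi_triple hq0 hq1 (neg_ne_zero.mpr hz.ne') hL hlim, ← mul_add,
      theta_add_theta_neg hq0 hq1, ← Sodd_eq hq0 hq1 hL hlim]
    ring
end

section
/- For every real number q with 0 < q < 1, one has S_odd(q⁴, q+q⁻¹) = 1/((1+q²)·Π_{j≥1}(1 − q^{2j})), the infinite product converging absolutely. -/
/-!
Write `x = q⁴` and `t = q + q⁻¹`. The weight `x ^ A' * t ^ B'` is a product of local weights, one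
for each position, equal to `1` where a sequence agrees with the ground sequence `1, 0, 1, 0, …`.
Hence `Sodd x t` is the limit, as `N → ∞`, of the total weight of the admissible sequences that
agree with the ground sequence from position `2N` on (`tsum_Ho`). These totals obey a two-state
transfer recursion `ab`, the state being whether the last free entry vanishes.

The recursion is solved explicitly (`ab_formula`): `t` times the total at `2N` equals
`(1 - x^(2N+1)) B_N(x)`, where

  `B_N(z) = Σ_j q^(4j²+6j+1) / ((z; z)_{N-j} (z; z)_{N+1+j})`   (`bT q z N`).

This rests on a second-order recurrence for `B_N(q⁴)` (`bT_rec4`), which follows from an identity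
of rational functions between neighbouring terms, summed over `j`.

The limit is found by varying `z` while keeping the weights `q^(4j²+6j+1)`. For every `z`,
`B_N(z) → (Σ_j q^(4j²+6j+1)) / (z; z)_∞²` (`bT_tendsto`). At `z = q⁸` the sum satisfies a
first-order recurrence (`bT_rec8`, a finite form of the Jacobi triple product), so it is an explicit
product (`bT_eight`), and the limit gives `Σ_j q^(4j²+6j+1)` as an infinite product. Inserting it at
`z = q⁴` yields `B_N(q⁴) → (q + q⁻¹) / ((1 + q²) (q²; q²)_∞)` (`bT_four_tendsto`), and division by
`t = q + q⁻¹` gives the theorem.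
-/

open scoped BigOperators

open Filter Topology

/-! ### Definition of the sums `bT` -/

/-- The finite `q`-Pochhammer symbol `(z; z)_n = ∏_{i=1}^n (1 - z^i)`. -/
noncomputable def qP (z : ℝ) (n : ℕ) : ℝ := ∏ i ∈ Finset.range n, (1 - z ^ (i + 1))

/-- The reciprocal `1 / (z; z)_n`, extended by `0` to negative integers `n`. With this
convention the sums over `j : ℤ` below need no explicit bounds. -/
noncomputable def qR (z : ℝ) (n : ℤ) : ℝ := if n < 0 then 0 else (qP z n.toNat)⁻¹

/-- The quadratic weight `q ^ (4j² + 6j + 1)`, common to the sums at base `q⁴` and at base `q⁸`. -/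
noncomputable def wt (q : ℝ) (j : ℤ) : ℝ := q ^ (4 * j ^ 2 + 6 * j + 1)

/-- The `j`-th term `q^(4j²+6j+1) / ((z; z)_{N-j} (z; z)_{N+1+j})` of `bT q z N`. -/
noncomputable def uT (q z : ℝ) (N j : ℤ) : ℝ := wt q j * (qR z (N - j) * qR z (N + 1 + j))

/-- The sum `Σ_j q^(4j²+6j+1) / ((z; z)_{N-j} (z; z)_{N+1+j})`; only `-N-1 ≤ j ≤ N` contribute. -/
noncomputable def bT (q z : ℝ) (N : ℤ) : ℝ := ∑' j : ℤ, uT q z N j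

lemma one_sub_pow_pos_s6 {z : ℝ} (h0 : 0 < z) (h1 : z < 1) (n : ℕ) : 0 < 1 - z ^ (n + 1) :=
  sub_pos.2 (pow_lt_one₀ h0.le h1 (Nat.succ_ne_zero n))

lemma qP_pos {z : ℝ} (h0 : 0 < z) (h1 : z < 1) (n : ℕ) : 0 < qP z n :=
  Finset.prod_pos fun i _ => one_sub_pow_pos_s6 h0 h1 i

/-- This holds for every integer `n`: at `n = 0` both sides vanish because of the factor
`1 - z ^ 0`. -/
lemma qR_sub_one {z : ℝ} (h0 : 0 < z) (h1 : z < 1) (n : ℤ) :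
    qR z (n - 1) = (1 - z ^ n) * qR z n := by
  rcases lt_trichotomy n 0 with h | h | h
  · simp [qR, h, show n - 1 < 0 by omega]
  · subst h; simp [qR]
  · obtain ⟨m, rfl⟩ : ∃ m : ℕ, n = m + 1 := ⟨(n - 1).toNat, by omega⟩
    have hp := (one_sub_pow_pos_s6 h0 h1 m).ne'
    have e : z ^ ((m : ℤ) + 1) = z ^ (m + 1) := by exact_mod_cast zpow_natCast z (m + 1)
    have h3 : ((m : ℤ) + 1).toNat = m + 1 := by omega
    rw [e]
    simp only [qR, add_sub_cancel_right, h3, Int.toNat_natCast]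
    rw [if_neg (by omega), if_neg (by omega)]
    have : qP z (m + 1) = qP z m * (1 - z ^ (m + 1)) := Finset.prod_range_succ _ _
    rw [this, mul_inv]
    field_simp

lemma hasSum_uT (q z : ℝ) (N : ℤ) : HasSum (uT q z N) (bT q z N) := by
  apply Summable.hasSum
  apply (hasSum_sum_of_ne_finset_zero (L := .unconditional ℤ)
    (s := Finset.Icc (-N - 1) N) ?_).summable
  intro j hj
  have : N - j < 0 ∨ N + 1 + j < 0 := by
    rw [Finset.mem_Icc] at hj; omega
  rcases this with h | h <;> simp [uT, qR, h]

lemma hasSum_uT_sub_one (q z : ℝ) (N : ℤ) :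
    HasSum (fun j => uT q z N (j - 1)) (bT q z N) :=
  (Equiv.hasSum_iff (Equiv.subRight (1 : ℤ)) (f := uT q z N)).2 (hasSum_uT q z N)

lemma hasSum_uT_add_one (q z : ℝ) (N : ℤ) :
    HasSum (fun j => uT q z N (j + 1)) (bT q z N) :=
  (Equiv.hasSum_iff (Equiv.addRight (1 : ℤ)) (f := uT q z N)).2 (hasSum_uT q z N)

lemma bT_neg_one (q z : ℝ) : bT q z (-1) = 0 := by
  have : ∀ j, uT q z (-1) j = 0 := by
    intro j
    have : (-1 : ℤ) - j < 0 ∨ (-1 : ℤ) + 1 + j < 0 := by omega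
    rcases this with h | h
    · simp only [uT, qR, h, if_true]; ring
    · simp only [uT, qR, h, if_true]; ring
  simp [bT, this]

lemma bT_zero (q z : ℝ) : bT q z 0 = (q + q⁻¹) * (1 - z)⁻¹ := by
  have h := hasSum_sum_of_ne_finset_zero (L := .unconditional ℤ)
    (f := uT q z 0) (s := {0, -1}) (by
    intro j hj
    have : (0 : ℤ) - j < 0 ∨ (0 : ℤ) + 1 + j < 0 := by
      simp only [Finset.mem_insert, Finset.mem_singleton] at hj; omega
    rcases this with h | h
    · simp only [uT, qR, h, if_true]; ring
    · simp only [uT, qR, h, if_true]; ring)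
  rw [bT, h.tsum_eq]
  simp [uT, qR, wt, qP]
  ring

/-! ### Recurrences in `N` -/

lemma wt_sub_one {q : ℝ} (hq : 0 < q) (j : ℤ) :
    q ^ 2 * wt q (j - 1) = wt q j * (((q ^ 8) ^ j)⁻¹) := by
  unfold wt
  rw [← zpow_natCast q, ← zpow_natCast q, ← zpow_mul, ← zpow_neg, ← zpow_add₀ hq.ne',
    ← zpow_add₀ hq.ne']
  congr 1; push_cast; ring

lemma wt_add_one {q : ℝ} (hq : 0 < q) (j : ℤ) :
    q⁻¹ ^ 2 * wt q (j + 1) = wt q j * (q ^ 8 * (q ^ 8) ^ j) := by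
  unfold wt
  rw [inv_pow, ← zpow_natCast q, ← zpow_natCast q, ← zpow_mul, ← zpow_neg, ← zpow_add₀ hq.ne',
    ← zpow_add₀ hq.ne', ← zpow_add₀ hq.ne']
  congr 1; push_cast; ring

/-- This lemma and the next three write a neighbouring term as a rational multiple of
`qR z (N - j) * qR z (N + 1 + j)`, the factor in the term `(N, j)`. -/
lemma uT_pred {q z : ℝ} (hz0 : 0 < z) (hz1 : z < 1) (N j : ℤ) : uT q z (N - 1) j =
    wt q j * ((1 - z ^ (N - j)) * (1 - z ^ (N + 1 + j)) * (qR z (N - j) * qR z (N + 1 + j))) := by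
  have h1 := qR_sub_one hz0 hz1 (N - j)
  have h2 := qR_sub_one hz0 hz1 (N + 1 + j)
  rw [uT, show N - 1 - j = N - j - 1 by ring, show N - 1 + 1 + j = N + 1 + j - 1 by ring, h1, h2]
  ring

lemma uT_pred_left {q z : ℝ} (hz0 : 0 < z) (hz1 : z < 1) (N j : ℤ) : uT q z (N - 1) (j - 1) =
    wt q (j - 1) * ((1 - z ^ (N + j)) * (1 - z ^ (N + 1 + j)) *
      (qR z (N - j) * qR z (N + 1 + j))) := by
  have h2 := qR_sub_one hz0 hz1 (N + 1 + j)
  have h3 := qR_sub_one hz0 hz1 (N + j)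
  rw [show N + 1 + j - 1 = N + j by ring] at h2
  rw [uT, show N - 1 - (j - 1) = N - j by ring, show N - 1 + 1 + (j - 1) = N + j - 1 by ring,
    h3, h2]
  ring

lemma uT_pred_right {q z : ℝ} (hz0 : 0 < z) (hz1 : z < 1) (N j : ℤ) : uT q z (N - 1) (j + 1) =
    wt q (j + 1) * ((1 - z ^ (N - j)) * (1 - z ^ (N - j - 1)) *
      (qR z (N - j) * qR z (N + 1 + j))) := by
  have h2 := qR_sub_one hz0 hz1 (N - j)
  have h3 := qR_sub_one hz0 hz1 (N - j - 1)
  rw [uT, show N - 1 - (j + 1) = N - j - 1 - 1 by ring,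
    show N - 1 + 1 + (j + 1) = N + 1 + j by ring, h3, h2]
  ring

lemma uT_pred_pred {q z : ℝ} (hz0 : 0 < z) (hz1 : z < 1) (N j : ℤ) : uT q z (N - 2) j =
    wt q j * ((1 - z ^ (N - j)) * (1 - z ^ (N - j - 1)) * (1 - z ^ (N + j)) *
      (1 - z ^ (N + 1 + j)) * (qR z (N - j) * qR z (N + 1 + j))) := by
  have h1 := qR_sub_one hz0 hz1 (N - j)
  have h2 := qR_sub_one hz0 hz1 (N - j - 1)
  have h3 := qR_sub_one hz0 hz1 (N + 1 + j)
  have h4 := qR_sub_one hz0 hz1 (N + j)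
  rw [show N + 1 + j - 1 = N + j by ring] at h3
  rw [uT, show N - 2 - j = N - j - 1 - 1 by ring,
    show N - 2 + 1 + j = N + j - 1 by ring, h2, h1, h4, h3]
  ring

/-- The identity of rational functions behind `key_four`, with `X = x ^ N` and `Y = x ^ j`. -/
lemma alg_four {x X Y : ℝ} (hx : x ≠ 0) (hY : Y ≠ 0) :
    (1 - X ^ 2) * ((1 - x * X ^ 2) - (1 - X / Y) * (1 - X * x * Y)) =
      X ^ 2 * ((Y ^ 2)⁻¹ * ((1 - X * Y) * (1 - X * x * Y)) + 2 * ((1 - X / Y) * (1 - X * x * Y))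
        + x ^ 2 * Y ^ 2 * ((1 - X / Y) * (1 - X / Y / x)))
      + (x - X ^ 2) * ((1 - X / Y) * (1 - X * x * Y))
      - x * ((1 - X / Y) * (1 - X / Y / x) * (1 - X * Y) * (1 - X * x * Y)) := by
  field_simp
  ring

/-- The identity of rational functions behind `key_eight`, with `X = x ^ N` and `Y = x ^ j`. -/
lemma alg_eight {x X Y : ℝ} (hx : x ≠ 0) (hY : Y ≠ 0) :
    (1 - X ^ 2) * (1 - x * X ^ 2) =
      X * (Y⁻¹ * ((1 - X * Y) * (1 - X * x * Y)) + x * Y * ((1 - X / Y) * (1 - X / Y / x)))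
      + (1 + X ^ 2) * ((1 - X / Y) * (1 - X * x * Y)) := by
  field_simp
  ring

/-- Termwise form of `bT_rec4`. The coefficients `q²`, `2`, `q⁻²` of the three shifts add up to
`(q + q⁻¹)²` after summation over `j`. -/
lemma key_four {q x : ℝ} (hq0 : 0 < q) (hx0 : 0 < x) (hx1 : x < 1) (N : ℤ)
    (hx : x = q ^ 4) (j : ℤ) :
      (1 - (x ^ N) ^ 2) * ((1 - x * (x ^ N) ^ 2) * uT q x N j - uT q x (N - 1) j) =
      (x ^ N) ^ 2 * (q ^ 2 * uT q x (N - 1) (j - 1) + 2 * uT q x (N - 1) j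
        + q⁻¹ ^ 2 * uT q x (N - 1) (j + 1)) + (x - (x ^ N) ^ 2) * uT q x (N - 1) j
        - x * uT q x (N - 2) j := by
  have h8 : (q ^ 8) ^ j = (x ^ j) ^ 2 := by
    rw [show q ^ 8 = x * x by rw [hx]; ring, mul_zpow, sq]
  have w1 := wt_sub_one hq0 j
  have w2 := wt_add_one hq0 j
  rw [h8] at w1 w2
  rw [show q ^ 8 = x ^ 2 by rw [hx]; ring] at w2
  have ha := alg_four (X := x ^ N) hx0.ne' (zpow_pos hx0 j).ne'
  have u1 := uT_pred (q := q) hx0 hx1 N j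
  have u2 := uT_pred_left (q := q) hx0 hx1 N j
  have u3 := uT_pred_right (q := q) hx0 hx1 N j
  have u4 := uT_pred_pred (q := q) hx0 hx1 N j
  have u0 : uT q x N j = wt q j * (qR x (N - j) * qR x (N + 1 + j)) := rfl
  simp only [zpow_sub₀ hx0.ne', zpow_add₀ hx0.ne', zpow_one] at u1 u2 u3 u4
  rw [u0, u1, u2, u3, u4]
  generalize x ^ N = X at *
  generalize x ^ j = Y at *
  generalize qR x (N - j) * qR x (N + 1 + j) = R at *
  generalize wt q j = w at *
  generalize wt q (j - 1) = wl at *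
  generalize wt q (j + 1) = wr at *
  linear_combination w * R * ha - X ^ 2 * ((1 - X * Y) * (1 - X * x * Y) * R) * w1 -
    X ^ 2 * ((1 - X / Y) * (1 - X / Y / x) * R) * w2

/-- Termwise form of `bT_rec8`. -/
lemma key_eight {q x : ℝ} (hq0 : 0 < q) (hx0 : 0 < x) (hx1 : x < 1) (N : ℤ)
    (hx : x = q ^ 8) (j : ℤ) :
      (1 - (x ^ N) ^ 2) * (1 - x * (x ^ N) ^ 2) * uT q x N j =
      x ^ N * (q ^ 2 * uT q x (N - 1) (j - 1) + q⁻¹ ^ 2 * uT q x (N - 1) (j + 1))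
        + (1 + (x ^ N) ^ 2) * uT q x (N - 1) j := by
  have w1 := wt_sub_one hq0 j
  have w2 := wt_add_one hq0 j
  rw [← hx] at w1 w2
  have ha := alg_eight (X := x ^ N) hx0.ne' (zpow_pos hx0 j).ne'
  have u1 := uT_pred (q := q) hx0 hx1 N j
  have u2 := uT_pred_left (q := q) hx0 hx1 N j
  have u3 := uT_pred_right (q := q) hx0 hx1 N j
  have u0 : uT q x N j = wt q j * (qR x (N - j) * qR x (N + 1 + j)) := rfl
  simp only [zpow_sub₀ hx0.ne', zpow_add₀ hx0.ne', zpow_one] at u1 u2 u3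
  rw [u0, u1, u2, u3]
  generalize x ^ N = X at *
  generalize x ^ j = Y at *
  generalize qR x (N - j) * qR x (N + 1 + j) = R at *
  generalize wt q j = w at *
  generalize wt q (j - 1) = wl at *
  generalize wt q (j + 1) = wr at *
  linear_combination w * R * ha - X * ((1 - X * Y) * (1 - X * x * Y) * R) * w1 -
    X * ((1 - X / Y) * (1 - X / Y / x) * R) * w2

/-- At base `x = q⁴` the sums satisfy a second-order recurrence in `N`, the one obeyed by the
transfer recursion `ab`. -/
lemma bT_rec4 {q x : ℝ} (hq0 : 0 < q) (hx0 : 0 < x) (hx1 : x < 1) (N : ℤ) (hx : x = q ^ 4) :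
    (1 - (x ^ N) ^ 2) * ((1 - x * (x ^ N) ^ 2) * bT q x N - bT q x (N - 1)) =
      (q + q⁻¹) ^ 2 * (x ^ N) ^ 2 * bT q x (N - 1) +
      (x - (x ^ N) ^ 2) * bT q x (N - 1) - x * bT q x (N - 2) := by
  have e0 := hasSum_uT q x N
  have e1 := hasSum_uT q x (N - 1)
  have e2 := hasSum_uT q x (N - 2)
  have el := hasSum_uT_sub_one q x (N - 1)
  have er := hasSum_uT_add_one q x (N - 1)
  have hL := ((e0.mul_left (1 - x * (x ^ N) ^ 2)).sub e1).mul_left (1 - (x ^ N) ^ 2)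
  have hR := ((((el.mul_left (q ^ 2)).add (e1.mul_left 2)).add (er.mul_left (q⁻¹ ^ 2))).mul_left
    ((x ^ N) ^ 2)).add (e1.mul_left (x - (x ^ N) ^ 2)) |>.sub (e2.mul_left x)
  have key := fun j => key_four (N := N) hq0 hx0 hx1 hx j
  simp only [key] at hL
  have hq := hq0.ne'
  rw [hL.unique hR]
  field_simp
  ring

/-- At base `x = q⁸` the recurrence has order one, so that `bT` is a product: a finite form of the
Jacobi triple product. -/
lemma bT_rec8 {q x : ℝ} (hq0 : 0 < q) (hx0 : 0 < x) (hx1 : x < 1) (N : ℤ) (hx : x = q ^ 8) :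
    (1 - (x ^ N) ^ 2) * (1 - x * (x ^ N) ^ 2) * bT q x N =
      (1 + q ^ 2 * x ^ N) * (1 + q⁻¹ ^ 2 * x ^ N) * bT q x (N - 1) := by
  have e0 := hasSum_uT q x N
  have e1 := hasSum_uT q x (N - 1)
  have el := hasSum_uT_sub_one q x (N - 1)
  have er := hasSum_uT_add_one q x (N - 1)
  have hL := e0.mul_left ((1 - (x ^ N) ^ 2) * (1 - x * (x ^ N) ^ 2))
  have hR := ((el.mul_left (q ^ 2)).add (er.mul_left (q⁻¹ ^ 2))).mul_left (x ^ N) |>.add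
    (e1.mul_left (1 + (x ^ N) ^ 2))
  have key := fun j => key_eight (N := N) hq0 hx0 hx1 hx j
  simp only [key] at hL
  have hq := hq0.ne'
  rw [hL.unique hR]
  field_simp
  ring

/-! ### Limits as `N → ∞` -/

/-- The infinite product `(z; z)_∞ = ∏_{i ≥ 1} (1 - z^i)`. -/
noncomputable def qInf (z : ℝ) : ℝ := ∏' i : ℕ, (1 - z ^ (i + 1))

lemma summable_neg_pow {z : ℝ} (hz0 : 0 < z) (hz1 : z < 1) : Summable fun i : ℕ => -z ^ (i + 1) :=
  ((summable_nat_add_iff 1).2 (summable_geometric_of_lt_one hz0.le hz1)).neg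

lemma multipliable_one_sub {z : ℝ} (hz0 : 0 < z) (hz1 : z < 1) :
    Multipliable fun i : ℕ => 1 - z ^ (i + 1) := by
  simpa [sub_eq_add_neg] using Real.multipliable_one_add_of_summable (summable_neg_pow hz0 hz1)

lemma qP_tendsto {z : ℝ} (hz0 : 0 < z) (hz1 : z < 1) : Tendsto (qP z) atTop (𝓝 (qInf z)) :=
  (multipliable_one_sub hz0 hz1).tendsto_prod_tprod_nat

lemma qInf_pos {z : ℝ} (hz0 : 0 < z) (hz1 : z < 1) : 0 < qInf z := by
  have h := Real.summable_log_one_add_of_summable (summable_neg_pow hz0 hz1)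
  simp only [← sub_eq_add_neg] at h
  rw [qInf, ← Real.rexp_tsum_eq_tprod (fun i => one_sub_pow_pos_s6 hz0 hz1 i) h]
  exact Real.exp_pos _

lemma qInf_le_qP {z : ℝ} (hz0 : 0 < z) (hz1 : z < 1) (n : ℕ) : qInf z ≤ qP z n := by
  refine Antitone.le_of_tendsto (antitone_nat_of_succ_le fun m => ?_) (qP_tendsto hz0 hz1) n
  rw [qP, Finset.prod_range_succ]
  exact mul_le_of_le_one_right (qP_pos hz0 hz1 m).le
    (by have := pow_pos hz0 (m + 1); linarith)

lemma qR_nonneg {z : ℝ} (hz0 : 0 < z) (hz1 : z < 1) (n : ℤ) : 0 ≤ qR z n := by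
  unfold qR
  split_ifs
  · exact le_rfl
  · exact (inv_pos.2 (qP_pos hz0 hz1 _)).le

lemma qR_le {z : ℝ} (hz0 : 0 < z) (hz1 : z < 1) (n : ℤ) : qR z n ≤ (qInf z)⁻¹ := by
  unfold qR
  split_ifs
  · exact (inv_pos.2 (qInf_pos hz0 hz1)).le
  · exact inv_anti₀ (qInf_pos hz0 hz1) (qInf_le_qP hz0 hz1 _)

lemma qR_tendsto {z : ℝ} (hz0 : 0 < z) (hz1 : z < 1) : Tendsto (qR z) atTop (𝓝 (qInf z)⁻¹) := by
  have h1 : Tendsto Int.toNat atTop atTop :=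
    tendsto_atTop.2 fun b => (eventually_ge_atTop (b : ℤ)).mono fun n hn => by omega
  have h2 := ((qP_tendsto hz0 hz1).comp h1).inv₀ (qInf_pos hz0 hz1).ne'
  refine h2.congr' ((eventually_ge_atTop (0 : ℤ)).mono fun n hn => ?_)
  simp [qR, not_lt.2 hn]

/-- Dominated convergence: the weights are summable and `1 / (z; z)_n ≤ 1 / (z; z)_∞`. The limit
depends on `z` only through `(z; z)_∞`, which allows the two bases to be compared. -/
lemma bT_tendsto {z : ℝ} (hz0 : 0 < z) (hz1 : z < 1)
    {q : ℝ} (hw : Summable (wt q)) (hw0 : ∀ j, 0 ≤ wt q j) :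
    Tendsto (fun N : ℕ => bT q z N) atTop
      (𝓝 ((∑' j, wt q j) * ((qInf z)⁻¹ * (qInf z)⁻¹))) := by
  rw [← tsum_mul_right]
  have hc : Tendsto (fun N : ℕ => (N : ℤ)) atTop atTop := tendsto_natCast_atTop_atTop
  refine tendsto_tsum_of_dominated_convergence
    (bound := fun j => wt q j * ((qInf z)⁻¹ * (qInf z)⁻¹)) (hw.mul_right _) (fun j => ?_)
    (Eventually.of_forall fun N j => ?_)
  · refine Tendsto.const_mul _ (Tendsto.mul ?_ ?_)
    · exact (qR_tendsto hz0 hz1).comp (tendsto_atTop_add_const_right _ (-j) hc)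
    · refine (qR_tendsto hz0 hz1).comp ?_
      simpa [add_assoc] using tendsto_atTop_add_const_right _ (1 + j) hc
  · have a1 := qR_nonneg hz0 hz1 (N - j)
    have a2 := qR_nonneg hz0 hz1 (N + 1 + j)
    have b1 := qR_le hz0 hz1 (N - j)
    have b2 := qR_le hz0 hz1 (N + 1 + j)
    rw [uT, Real.norm_of_nonneg (mul_nonneg (hw0 j) (mul_nonneg a1 a2))]
    exact mul_le_mul_of_nonneg_left (mul_le_mul b1 b2 a2 (a1.trans b1)) (hw0 j)

lemma summable_wt {q : ℝ} (hq0 : 0 < q) (hq1 : q < 1) : Summable (wt q) := by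
  have hg : Summable fun j : ℤ => q ^ (-4 : ℤ) * q ^ j.natAbs := by
    refine Summable.mul_left _ (Summable.of_nat_of_neg ?_ ?_) <;>
    simpa using summable_geometric_of_lt_one hq0.le hq1
  refine Summable.of_nonneg_of_le (fun j => (zpow_pos hq0 _).le) (fun j => ?_) hg
  rw [wt, ← zpow_natCast, ← zpow_add₀ hq0.ne']
  refine zpow_le_zpow_right_of_le_one₀ hq0 hq1.le ?_
  rcases le_total 0 j with h | h
  · rw [Int.natAbs_of_nonneg h]; nlinarith
  · rw [Int.ofNat_natAbs_of_nonpos h]; nlinarith [sq_nonneg (8 * j + 7)]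

/-- The product `∏_{k=1}^N (1 + q^(8k+2)) (1 + q^(8k-2))`. -/
noncomputable def qQ (q : ℝ) (N : ℕ) : ℝ :=
  ∏ k ∈ Finset.range N, (1 + q ^ 2 * (q ^ 8) ^ (k + 1)) * (1 + q⁻¹ ^ 2 * (q ^ 8) ^ (k + 1))

lemma qP_succ (z : ℝ) (n : ℕ) : qP z (n + 1) = qP z n * (1 - z ^ (n + 1)) :=
  Finset.prod_range_succ _ _

lemma qQ_succ (q : ℝ) (N : ℕ) : qQ q (N + 1) = qQ q N *
    ((1 + q ^ 2 * (q ^ 8) ^ (N + 1)) * (1 + q⁻¹ ^ 2 * (q ^ 8) ^ (N + 1))) :=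
  Finset.prod_range_succ _ _

/-- Iterating `bT_rec8` from `bT_zero` evaluates the sum at base `q⁸`. -/
lemma bT_eight {q : ℝ} (hq0 : 0 < q) (hq1 : q < 1) (N : ℕ) :
    bT q (q ^ 8) N * qP (q ^ 8) (2 * N + 1) = (q + q⁻¹) * qQ q N := by
  have hz0 : 0 < q ^ 8 := by positivity
  have hz1 : q ^ 8 < 1 := pow_lt_one₀ hq0.le hq1 (by norm_num)
  induction N with
  | zero =>
    have : 1 - q ^ 8 ≠ 0 := by linarith
    simp only [Nat.cast_zero, bT_zero, qP, qQ]
    simp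
    field_simp
  | succ N ih =>
    have h := bT_rec8 hq0 hz0 hz1 (N + 1) rfl
    rw [add_sub_cancel_right] at h
    have e : (q ^ 8) ^ ((N : ℤ) + 1) = (q ^ 8) ^ (N + 1) := by
      rw [← zpow_natCast]; push_cast; rfl
    rw [e] at h
    rw [show 2 * (N + 1) + 1 = 2 * N + 1 + 1 + 1 by ring, qP_succ, qP_succ, qQ_succ]
    push_cast
    have e1 : (q ^ 8) ^ (2 * N + 1 + 1) = ((q ^ 8) ^ (N + 1)) ^ 2 := by ring
    have e2 : (q ^ 8) ^ (2 * N + 1 + 1 + 1) = q ^ 8 * ((q ^ 8) ^ (N + 1)) ^ 2 := by ring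
    rw [e1, e2]
    generalize (q ^ 8) ^ (N + 1) = X at *
    linear_combination qP (q ^ 8) (2 * N + 1) * h +
      (1 + q ^ 2 * X) * (1 + q⁻¹ ^ 2 * X) * ih

/-- Since `1 + q^i = (1 - q^(2i)) / (1 - q^i)`, the factors `1 + q^i` with `i ≡ 2 mod 4` are all
factors with even `i` divided by those with `4 ∣ i`. -/
lemma qQ_eq {q : ℝ} (hq0 : 0 < q) (N : ℕ) :
    (1 + q ^ 2) * qQ q N * (qP (q ^ 2) (4 * N + 1) * qP (q ^ 8) (2 * N)) =
      qP (q ^ 4) (4 * N + 1) * qP (q ^ 4) (2 * N) := by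
  induction N with
  | zero => simp [qP, qQ]; ring
  | succ N ih =>
    rw [show 4 * (N + 1) + 1 = 4 * N + 1 + 1 + 1 + 1 + 1 by ring,
      show 2 * (N + 1) = 2 * N + 1 + 1 by ring, qQ_succ]
    simp only [qP_succ _ (_ + 1), qP_succ _ (2 * N)]
    have hq := hq0.ne'
    have e : q⁻¹ ^ 2 * (q ^ 8) ^ (N + 1) = q ^ 6 * q ^ (8 * N) := by
      field_simp; ring
    have e0 : (q ^ 8) ^ (N + 1) = q ^ 8 * q ^ (8 * N) := by ring
    have f1 : (q ^ 2) ^ (4 * N + 1 + 1) = q ^ 4 * q ^ (8 * N) := by ring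
    have f2 : (q ^ 2) ^ (4 * N + 1 + 1 + 1) = q ^ 6 * q ^ (8 * N) := by ring
    have f3 : (q ^ 2) ^ (4 * N + 1 + 1 + 1 + 1) = q ^ 8 * q ^ (8 * N) := by ring
    have f4 : (q ^ 2) ^ (4 * N + 1 + 1 + 1 + 1 + 1) = q ^ 10 * q ^ (8 * N) := by ring
    have g1 : (q ^ 8) ^ (2 * N + 1) = (q ^ 4 * q ^ (8 * N)) ^ 2 := by ring
    have g2 : (q ^ 8) ^ (2 * N + 1 + 1) = (q ^ 8 * q ^ (8 * N)) ^ 2 := by ring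
    have h1 : (q ^ 4) ^ (2 * N + 1) = q ^ 4 * q ^ (8 * N) := by ring
    have h2 : (q ^ 4) ^ (2 * N + 1 + 1) = q ^ 8 * q ^ (8 * N) := by ring
    have k : ∀ m : ℕ, (q ^ 4) ^ m = ((q ^ 2) ^ m) ^ 2 := fun m => by ring
    rw [e, h1, h2, k (4 * N + 1 + 1), k (4 * N + 1 + 1 + 1), k (4 * N + 1 + 1 + 1 + 1),
      k (4 * N + 1 + 1 + 1 + 1 + 1), f1, f2, f3, f4, g1, g2, e0]
    generalize q ^ (8 * N) = Y at *
    generalize qP (q ^ 2) (4 * N + 1) = A at *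
    generalize qP (q ^ 8) (2 * N) = B at *
    generalize qP (q ^ 4) (4 * N + 1) = C at *
    generalize qP (q ^ 4) (2 * N) = D at *
    generalize qQ q N = E at *
    linear_combination (1 - q ^ 4 * Y) * (1 - q ^ 8 * Y) * (1 - (q ^ 4 * Y) ^ 2) *
      (1 - (q ^ 6 * Y) ^ 2) * (1 - (q ^ 8 * Y) ^ 2) * (1 - (q ^ 10 * Y) ^ 2) * ih

/-- The limit at base `q⁸`, known from `bT_eight` and `qQ_eq`, determines `Σ_j wt q j`, hence the
limit at base `q⁴`. -/
lemma bT_four_tendsto {q : ℝ} (hq0 : 0 < q) (hq1 : q < 1) :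
    Tendsto (fun N : ℕ => bT q (q ^ 4) N) atTop
      (𝓝 ((q + q⁻¹) * ((1 + q ^ 2) * qInf (q ^ 2))⁻¹)) := by
  have hp : ∀ k : ℕ, k ≠ 0 → 0 < q ^ k ∧ q ^ k < 1 := fun k hk =>
    ⟨by positivity, pow_lt_one₀ hq0.le hq1 hk⟩
  have P2 := qInf_pos (hp 2 (by norm_num)).1 (hp 2 (by norm_num)).2
  have P4 := qInf_pos (hp 4 (by norm_num)).1 (hp 4 (by norm_num)).2
  have P8 := qInf_pos (hp 8 (by norm_num)).1 (hp 8 (by norm_num)).2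
  have t2 := qP_tendsto (hp 2 (by norm_num)).1 (hp 2 (by norm_num)).2
  have t4 := qP_tendsto (hp 4 (by norm_num)).1 (hp 4 (by norm_num)).2
  have t8 := qP_tendsto (hp 8 (by norm_num)).1 (hp 8 (by norm_num)).2
  have s1 : Tendsto (fun N : ℕ => 2 * N + 1) atTop atTop :=
    tendsto_atTop_mono (fun N => by simp; omega) tendsto_id
  have s2 : Tendsto (fun N : ℕ => 2 * N) atTop atTop :=
    tendsto_atTop_mono (fun N => by simp; omega) tendsto_id
  have s3 : Tendsto (fun N : ℕ => 4 * N + 1) atTop atTop :=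
    tendsto_atTop_mono (fun N => by simp; omega) tendsto_id
  have hw0 : ∀ j, 0 ≤ wt q j := fun j => (zpow_pos hq0 _).le
  have hw := summable_wt hq0 hq1
  have b4 := bT_tendsto (hp 4 (by norm_num)).1 (hp 4 (by norm_num)).2 hw hw0
  have b8 := bT_tendsto (hp 8 (by norm_num)).1 (hp 8 (by norm_num)).2 hw hw0
  have hq2 : 0 < 1 + q ^ 2 := by positivity
  have ht : 0 < q + q⁻¹ := by positivity
  have l1 := ((b8.mul (t8.comp s1)).mul ((t2.comp s3).mul (t8.comp s2))).const_mul (1 + q ^ 2)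
  have l2 := ((t4.comp s3).mul (t4.comp s2)).const_mul (q + q⁻¹)
  have := tendsto_nhds_unique l1 (l2.congr fun N => by
    have h1 := bT_eight hq0 hq1 N
    have h2 := qQ_eq hq0 N
    simp only [Function.comp]
    rw [h1, ← h2]; ring)
  convert b4 using 2
  generalize (∑' j, wt q j) = W at *
  have hW : W * (1 + q ^ 2) * qInf (q ^ 2) = (q + q⁻¹) * qInf (q ^ 4) ^ 2 := by
    rw [sq (qInf (q ^ 4)), ← this]; field_simp
  generalize q + q⁻¹ = t at *
  generalize 1 + q ^ 2 = y at *
  field_simp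
  linear_combination -hW

/-! ### Transfer recursion for sequences with a fixed tail -/

open scoped ENNReal

/-- The sequence with which all elements of `Ho` eventually agree; position `n` stands for the
index `i = n + 1`. -/
def gnd (n : ℕ) : ℕ := if (n + 1) % 2 = 1 then 1 else 0

/-- The contribution of an entry `k` at position `n` to the weight `x ^ A' * t ^ B'`. It is `1`
when `k = gnd n`. -/
noncomputable def gw (x t : ℝ) (n k : ℕ) : ℝ :=
  if (n + 1) % 2 = 0 then x ^ (((n : ℤ) + 1) * (k : ℤ)) * t ^ (if 1 ≤ k then (2 : ℤ) else 0)
  else x ^ (((n : ℤ) + 1) * ((k : ℤ) - 1)) * t ^ (if k = 0 then (-2 : ℤ) else 0)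

/-- The sequences that agree with `gnd` from position `m` on. -/
def Gs (m : ℕ) : Set (ℕ → ℕ) := {ω | ∀ n ≥ m, ω n = gnd n}

/-- No two consecutive zeros among the first `m` entries. -/
def NoZZ (m : ℕ) (ω : ℕ → ℕ) : Prop := ∀ n, n + 1 < m → ¬(ω n = 0 ∧ ω (n + 1) = 0)

/-- The last of the first `m` entries, at position `m - 1`, is zero; false for `m = 0`. -/
def LastZero (m : ℕ) (ω : ℕ → ℕ) : Prop := ∃ n, m = n + 1 ∧ ω n = 0

open Classical in
/-- The weight of the first `m` entries of `ω`, or `0` if two consecutive ones vanish. Values in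
`ℝ≥0∞` make all rearrangements of sums unconditional. -/
noncomputable def phi (x t : ℝ) (m : ℕ) (ω : ℕ → ℕ) : ℝ≥0∞ :=
  if NoZZ m ω then ∏ n ∈ Finset.range m, ENNReal.ofReal (gw x t n (ω n)) else 0

open Classical in
/-- The total weight of the sequences in `Gs m` whose entry at `m - 1` is not zero. -/
noncomputable def sA (x t : ℝ) (m : ℕ) : ℝ≥0∞ :=
  ∑' ω : Gs m, if LastZero m ω.1 then 0 else phi x t m ω.1

open Classical in
/-- The total weight of the sequences in `Gs m` whose entry at `m - 1` is zero. -/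
noncomputable def sB (x t : ℝ) (m : ℕ) : ℝ≥0∞ :=
  ∑' ω : Gs m, if LastZero m ω.1 then phi x t m ω.1 else 0

lemma sA_add_sB (x t : ℝ) (m : ℕ) : sA x t m + sB x t m = ∑' ω : Gs m, phi x t m ω.1 := by
  rw [sA, sB, ← ENNReal.tsum_add]
  refine tsum_congr fun ω => ?_
  split_ifs <;> simp

/-- A sequence in `Gs (m + 1)` is a sequence in `Gs m` with a free entry at position `m`. -/
def updEquiv (m : ℕ) : ℕ × Gs m ≃ Gs (m + 1) where
  toFun p := ⟨Function.update p.2.1 m p.1, fun n hn => by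
    rw [Function.update_of_ne (by omega)]; exact p.2.2 n (by omega)⟩
  invFun ω := (ω.1 m, ⟨Function.update ω.1 m (gnd m), fun n hn => by
    rcases eq_or_ne n m with rfl | h
    · simp
    · rw [Function.update_of_ne h]; exact ω.2 n (by omega)⟩)
  left_inv p := by
    rcases p with ⟨k, ω, hω⟩
    simp [← hω m le_rfl]
  right_inv ω := by
    rcases ω with ⟨ω, hω⟩
    simp

lemma lastZero_update (m k : ℕ) (ω : ℕ → ℕ) :
    LastZero (m + 1) (Function.update ω m k) ↔ k = 0 := by
  constructor
  · rintro ⟨n, h, h'⟩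
    obtain rfl : m = n := by omega
    simpa using h'
  · rintro rfl
    exact ⟨m, rfl, by simp⟩

lemma noZZ_update (m k : ℕ) (ω : ℕ → ℕ) :
    NoZZ (m + 1) (Function.update ω m k) ↔ NoZZ m ω ∧ ¬(LastZero m ω ∧ k = 0) := by
  constructor
  · intro h
    refine ⟨fun n hn => ?_, ?_⟩
    · have := h n (by omega)
      rwa [Function.update_of_ne (by omega), Function.update_of_ne (by omega)] at this
    · rintro ⟨⟨n, rfl, hn⟩, rfl⟩
      refine h n (by omega) ⟨?_, by simp⟩
      rwa [Function.update_of_ne (by omega)]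
  · rintro ⟨h1, h2⟩ n hn
    rw [Function.update_of_ne (by omega : n ≠ m)]
    rcases eq_or_ne (n + 1) m with h | h
    · subst h
      simp only [Function.update_self]
      exact fun h => h2 ⟨⟨n, rfl, h.1⟩, h.2⟩
    · rw [Function.update_of_ne h]
      exact h1 n (by omega)

lemma phi_update (x t : ℝ) (m k : ℕ) (ω : ℕ → ℕ) [Decidable (LastZero m ω ∧ k = 0)] :
    phi x t (m + 1) (Function.update ω m k) =
      if LastZero m ω ∧ k = 0 then 0 else ENNReal.ofReal (gw x t m k) * phi x t m ω := by
  have hp : ∏ n ∈ Finset.range (m + 1), ENNReal.ofReal (gw x t n (Function.update ω m k n)) =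
      ENNReal.ofReal (gw x t m k) * ∏ n ∈ Finset.range m, ENNReal.ofReal (gw x t n (ω n)) := by
    rw [Finset.prod_range_succ, Function.update_self, mul_comm]
    congr 1
    refine Finset.prod_congr rfl fun n hn => ?_
    rw [Function.update_of_ne (Finset.mem_range.1 hn).ne]
  have hz := noZZ_update m k ω
  unfold phi
  rw [hp]
  by_cases h1 : NoZZ m ω <;> by_cases h2 : LastZero m ω ∧ k = 0 <;>
    simp only [h1, h2, not_true_eq_false, not_false_eq_true, and_true, and_false, iff_true,
      iff_false] at hz <;> simp [h1, h2, hz]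

lemma sA_succ (x t : ℝ) (m : ℕ) : sA x t (m + 1) =
    (∑' k : ℕ, if k = 0 then 0 else ENNReal.ofReal (gw x t m k)) * (sA x t m + sB x t m) := by
  classical
  rw [sA_add_sB, sA, ← (updEquiv m).tsum_eq, ENNReal.tsum_prod', ← ENNReal.tsum_mul_right]
  refine tsum_congr fun k => ?_
  rw [← ENNReal.tsum_mul_left]
  refine tsum_congr fun ω => ?_
  simp only [updEquiv, Equiv.coe_fn_mk, lastZero_update, phi_update]
  split_ifs <;> simp_all

lemma sB_succ (x t : ℝ) (m : ℕ) : sB x t (m + 1) =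
    ENNReal.ofReal (gw x t m 0) * sA x t m := by
  classical
  rw [sA, sB, ← (updEquiv m).tsum_eq, ENNReal.tsum_prod', tsum_eq_single 0]
  · rw [← ENNReal.tsum_mul_left]
    refine tsum_congr fun ω => ?_
    simp only [updEquiv, Equiv.coe_fn_mk, lastZero_update, phi_update]
    split_ifs <;> simp_all
  · intro k hk
    simp [updEquiv, lastZero_update, hk]

lemma Gs_zero : Gs 0 = {gnd} := by
  ext ω
  simp only [Gs, Set.mem_ofPred_eq, Set.mem_singleton_iff]
  exact ⟨fun h => funext fun n => h n (Nat.zero_le n), fun h n _ => by rw [h]⟩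

lemma sA_zero (x t : ℝ) : sA x t 0 = 1 := by
  have h : ∀ ω, ¬ LastZero 0 ω := by rintro ω ⟨n, h, -⟩; omega
  have h2 : ∀ ω, NoZZ 0 ω := fun ω n hn => by omega
  rw [sA, Gs_zero]
  simp [h, phi, h2]

lemma sB_zero (x t : ℝ) : sB x t 0 = 0 := by
  have h : ∀ ω, ¬ LastZero 0 ω := by rintro ω ⟨n, h, -⟩; omega
  simp [sB, h]

/-- The sum of the local weights `gw x t m k` over `k ≥ 1`, in closed form (see `hasSum_gw`). -/
noncomputable def hh (x t : ℝ) (m : ℕ) : ℝ :=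
  if (m + 1) % 2 = 0 then t ^ 2 * x ^ (m + 1) * (1 - x ^ (m + 1))⁻¹ else (1 - x ^ (m + 1))⁻¹

/-- The transfer recursion: the real values of `(sA x t m, sB x t m)` (see `sAB_eq`). A non-zero
entry may follow anything, a zero only a non-zero entry. -/
noncomputable def ab (x t : ℝ) : ℕ → ℝ × ℝ
  | 0 => (1, 0)
  | m + 1 => (hh x t m * ((ab x t m).1 + (ab x t m).2), gw x t m 0 * (ab x t m).1)

lemma gw_nonneg {x t : ℝ} (hx0 : 0 < x) (ht : 0 < t) (n k : ℕ) : 0 ≤ gw x t n k := by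
  unfold gw; split_ifs <;> positivity

lemma hh_nonneg {x t : ℝ} (hx0 : 0 < x) (hx1 : x < 1) (ht : 0 < t) (m : ℕ) : 0 ≤ hh x t m := by
  have := one_sub_pow_pos_s6 hx0 hx1 m
  unfold hh; split_ifs <;> positivity

lemma hasSum_gw {x t : ℝ} (hx0 : 0 < x) (hx1 : x < 1) (m : ℕ) :
    HasSum (fun k => if k = 0 then 0 else gw x t m k) (hh x t m) := by
  have h := (hasSum_nat_add_iff (f := fun k => if k = 0 then 0 else gw x t m k) 1
    (g := hh x t m)).1 (by
      have hg := hasSum_geometric_of_lt_one (pow_nonneg hx0.le (m + 1))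
        (pow_lt_one₀ hx0.le hx1 (Nat.succ_ne_zero m))
      simp only [Nat.add_eq_zero_iff, one_ne_zero, and_false, if_false]
      by_cases hp : (m + 1) % 2 = 0
      · rw [hh, if_pos hp]
        suffices hf : ∀ k, gw x t m (k + 1) = t ^ 2 * x ^ (m + 1) * (x ^ (m + 1)) ^ k by
          simp only [hf]
          exact hg.mul_left (t ^ 2 * x ^ (m + 1))
        intro k
        have : x ^ (((m : ℤ) + 1) * ((k + 1 : ℕ) : ℤ)) = x ^ ((m + 1) * (k + 1)) := by
          rw [← zpow_natCast]; push_cast; rfl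
        rw [gw, if_pos hp, if_pos (by omega), this]
        norm_cast
        ring
      · rw [hh, if_neg hp]
        suffices hf : ∀ k, gw x t m (k + 1) = (x ^ (m + 1)) ^ k by
          simp only [hf]
          exact hg
        intro k
        have : x ^ (((m : ℤ) + 1) * (((k + 1 : ℕ) : ℤ) - 1)) = x ^ ((m + 1) * k) := by
          rw [← zpow_natCast]; push_cast; congr 1; ring
        rw [gw, if_neg hp, if_neg (by omega), this, zpow_zero, mul_one, pow_mul])
  simpa using h

lemma ab_nonneg {x t : ℝ} (hx0 : 0 < x) (hx1 : x < 1) (ht : 0 < t) (m : ℕ) :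
    0 ≤ (ab x t m).1 ∧ 0 ≤ (ab x t m).2 := by
  induction m with
  | zero => simp [ab]
  | succ m ih =>
    exact ⟨mul_nonneg (hh_nonneg hx0 hx1 ht m) (add_nonneg ih.1 ih.2),
      mul_nonneg (gw_nonneg hx0 ht m 0) ih.1⟩

lemma sAB_eq {x t : ℝ} (hx0 : 0 < x) (hx1 : x < 1) (ht : 0 < t) (m : ℕ) :
    sA x t m = ENNReal.ofReal (ab x t m).1 ∧
    sB x t m = ENNReal.ofReal (ab x t m).2 := by
  induction m with
  | zero => simp [ab, sA_zero, sB_zero]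
  | succ m ih =>
    have hn := ab_nonneg hx0 hx1 ht m
    have hs := hasSum_gw (t := t) hx0 hx1 m
    have h : ∑' k : ℕ, (if k = 0 then 0 else ENNReal.ofReal (gw x t m k)) =
        ENNReal.ofReal (hh x t m) := by
      rw [← hs.tsum_eq, ENNReal.ofReal_tsum_of_nonneg _ hs.summable]
      · refine tsum_congr fun k => ?_
        split_ifs <;> simp
      · intro k
        split_ifs
        · exact le_rfl
        · exact gw_nonneg hx0 ht m k
    constructor
    · rw [sA_succ, h, ih.1, ih.2, ← ENNReal.ofReal_add hn.1 hn.2,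
        ← ENNReal.ofReal_mul (hh_nonneg hx0 hx1 ht m)]
      rfl
    · rw [sB_succ, ih.1, ← ENNReal.ofReal_mul (gw_nonneg hx0 ht m 0)]
      rfl

/-! ### Solution of the recursion -/

/-- Solution of the transfer recursion at even times in terms of `bT`. Two steps of the recursion
are equivalent to `bT_rec4`. -/
lemma ab_formula {q x : ℝ} (hq0 : 0 < q) (hx0 : 0 < x) (hx1 : x < 1) (hx : x = q ^ 4) (N : ℕ) :
    (q + q⁻¹) * (ab x (q + q⁻¹) (2 * N)).1 =
        (1 - x ^ (2 * N + 1)) * bT q x N - bT q x (N - 1) ∧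
    (q + q⁻¹) * ((ab x (q + q⁻¹) (2 * N)).1 + (ab x (q + q⁻¹) (2 * N)).2) =
        (1 - x ^ (2 * N + 1)) * bT q x N := by
  have ht : 0 < q + q⁻¹ := by positivity
  induction N with
  | zero =>
    have : 1 - x ≠ 0 := by linarith
    have h := bT_neg_one q x
    simp only [Nat.cast_zero, zero_sub, h, bT_zero, ab]
    simp
    field_simp
  | succ N ih =>
    obtain ⟨ih1, ih2⟩ := ih
    have hr := bT_rec4 hq0 hx0 hx1 (N + 1) hx
    rw [add_sub_cancel_right, show (N : ℤ) + 1 - 2 = N - 1 by ring] at hr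
    have e : x ^ ((N : ℤ) + 1) = x ^ (N + 1) := by
      rw [← zpow_natCast]; push_cast; rfl
    rw [e] at hr
    rw [show 2 * (N + 1) = 2 * N + 1 + 1 by ring]
    have h1 : hh x (q + q⁻¹) (2 * N) = (1 - x ^ (2 * N + 1))⁻¹ := by
      rw [hh, if_neg (by omega)]
    have h2 : hh x (q + q⁻¹) (2 * N + 1) =
        (q + q⁻¹) ^ 2 * x ^ (2 * N + 1 + 1) * (1 - x ^ (2 * N + 1 + 1))⁻¹ := by
      rw [hh, if_pos (by omega)]
    have h3 : gw x (q + q⁻¹) (2 * N) 0 = (x ^ (2 * N + 1))⁻¹ * ((q + q⁻¹) ^ 2)⁻¹ := by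
      rw [gw, if_neg (by omega)]
      have e1 : x ^ ((((2 * N : ℕ) : ℤ) + 1) * (((0 : ℕ) : ℤ) - 1)) = (x ^ (2 * N + 1))⁻¹ := by
        rw [← zpow_natCast, ← zpow_neg]; congr 1; push_cast; ring
      rw [e1, if_pos rfl, zpow_neg]
      norm_cast
    have h4 : gw x (q + q⁻¹) (2 * N + 1) 0 = 1 := by
      rw [gw, if_pos (by omega)]
      simp
    simp only [ab, h1, h2, h3, h4]
    have p1 := (one_sub_pow_pos_s6 hx0 hx1 (2 * N)).ne'
    have p2 := (one_sub_pow_pos_s6 hx0 hx1 (2 * N + 1)).ne'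
    have hxp : x ^ (2 * N + 1) ≠ 0 := (pow_pos hx0 _).ne'
    have e2 : x ^ (2 * N + 1 + 1) = (x ^ (N + 1)) ^ 2 := by ring
    have e3 : x ^ (2 * N + 1 + 1 + 1) = x * (x ^ (N + 1)) ^ 2 := by ring
    have e4 : x * x ^ (2 * N + 1) = (x ^ (N + 1)) ^ 2 := by ring
    rw [e3]
    rw [e2] at p2 ⊢
    push_cast
    rw [add_sub_cancel_right]
    rw [← e4] at hr p2 ⊢
    -- From here on `X = x ^ (2N+1)`, and `T0`, `T1`, `T2` are `bT` at `N - 1`, `N`, `N + 1`.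
    generalize x ^ (2 * N + 1) = X at *
    generalize (ab x (q + q⁻¹) (2 * N)).1 = a at *
    generalize (ab x (q + q⁻¹) (2 * N)).2 = b at *
    generalize bT q x (N + 1) = T2 at *
    generalize bT q x (N - 1) = T0 at *
    generalize bT q x N = T1 at *
    generalize q + q⁻¹ = t at *
    have i2 : t * ((1 - X)⁻¹ * (a + b)) = T1 := by
      field_simp; linear_combination ih2
    have i1 : t * (t ^ 2 * (x * X) * (1 - x * X)⁻¹ *
        ((1 - X)⁻¹ * (a + b) + X⁻¹ * (t ^ 2)⁻¹ * a)) = (1 - x * (x * X)) * T2 - T1 := by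
      have : t * (t ^ 2 * (x * X) * (1 - x * X)⁻¹ *
        ((1 - X)⁻¹ * (a + b) + X⁻¹ * (t ^ 2)⁻¹ * a)) = (t ^ 2 * (x * X) * T1 + x * (t * a)) *
          (1 - x * X)⁻¹ := by
        rw [← i2]; field_simp
      rw [this, ih1, ← div_eq_mul_inv, div_eq_iff p2]
      linear_combination -hr
    refine ⟨i1, ?_⟩
    rw [mul_add, i1]
    linear_combination i2

/-! ### Passage to the sum over `Ho` -/

lemma zpow_sum {x : ℝ} (hx : x ≠ 0) (s : Finset ℕ) (f : ℕ → ℤ) :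
    x ^ (∑ n ∈ s, f n) = ∏ n ∈ s, x ^ f n := by
  induction s using Finset.induction_on with
  | empty => simp
  | insert a s ha ih => rw [Finset.sum_insert ha, Finset.prod_insert ha, zpow_add₀ hx, ih]

/-- Beyond position `m` the sequence is the ground sequence, which contributes nothing to either
exponent. -/
lemma weight_eq {x t : ℝ} (hx : x ≠ 0) (ht : t ≠ 0) {m : ℕ} {ω : ℕ → ℕ} (hω : ω ∈ Gs m) :
    x ^ A'fun ω * t ^ B'fun ω = ∏ n ∈ Finset.range m, gw x t n (ω n) := by
  have hg : ∀ n, n ∉ Finset.range m → ω n = gnd n := fun n hn => hω n (by simpa using hn)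
  have hA : A'fun ω = ∑ n ∈ Finset.range m, (if (n + 1) % 2 = 0 then ((n : ℤ) + 1) * (ω n : ℤ)
             else ((n : ℤ) + 1) * ((ω n : ℤ) - 1)) := by
    refine finsum_eq_sum_of_support_subset _ fun n hn => ?_
    by_contra h
    have := hg n h
    apply hn
    rcases Nat.mod_two_eq_zero_or_one (n + 1) with h | h <;> simp [this, gnd, h]
  have hB : B'fun ω = ∑ n ∈ Finset.range m,
      (2 * ((if (n + 1) % 2 = 0 ∧ 1 ≤ ω n then (1 : ℤ) else 0) -
        (if (n + 1) % 2 = 1 ∧ ω n = 0 then (1 : ℤ) else 0))) := by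
    rw [B'fun, ← Finset.mul_sum, Finset.sum_sub_distrib]
    congr 2
    all_goals
      refine finsum_eq_sum_of_support_subset _ fun n hn => ?_
      by_contra h
      have := hg n h
      apply hn
      rcases Nat.mod_two_eq_zero_or_one (n + 1) with h | h <;> simp [this, gnd, h]
  rw [hA, hB, zpow_sum hx, zpow_sum ht, ← Finset.prod_mul_distrib]
  refine Finset.prod_congr rfl fun n _ => ?_
  unfold gw
  rcases Nat.mod_two_eq_zero_or_one (n + 1) with h | h <;> by_cases h' : ω n = 0 <;>
    simp [h, h', Nat.one_le_iff_ne_zero]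

lemma Gs_mono {m n : ℕ} (h : m ≤ n) : Gs m ⊆ Gs n := fun _ hω k hk => hω k (h.trans hk)

lemma exists_Gs {ω : ℕ → ℕ} (h : ω ∈ Ho) : ∃ m, ω ∈ Gs m := h.2

/-- At an even cut `2N` the ground tail starts with `1`, so no pair of zeros can straddle the cut.
At an odd cut this would fail. -/
lemma mem_Ho_of_noZZ {N : ℕ} {ω : ℕ → ℕ} (h : ω ∈ Gs (2 * N)) (h' : NoZZ (2 * N) ω) : ω ∈ Ho := by
  refine ⟨fun n => ?_, 2 * N, h⟩
  rcases lt_or_ge (n + 1) (2 * N) with h1 | h1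
  · exact h' n h1
  · rintro ⟨h2, h3⟩
    have e1 := h (n + 1) h1
    rw [gnd] at e1
    split_ifs at e1 with hp
    · omega
    · have e2 := h n (by omega)
      rw [gnd, if_pos (by omega)] at e2
      omega

/-- The summand of `Sodd`, as an extended non-negative real. -/
noncomputable def wF (x t : ℝ) (ω : ℕ → ℕ) : ℝ≥0∞ := ENNReal.ofReal (x ^ A'fun ω * t ^ B'fun ω)

lemma tsum_phi {x t : ℝ} (hx : 0 < x) (ht : 0 < t) (N : ℕ) :
    ∑' ω : Gs (2 * N), phi x t (2 * N) ω.1 = ∑' ω, (Ho ∩ Gs (2 * N)).indicator (wF x t) ω := by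
  rw [tsum_subtype (Gs (2 * N)) (phi x t (2 * N))]
  refine tsum_congr fun ω => ?_
  by_cases h : ω ∈ Gs (2 * N)
  · rw [Set.indicator_of_mem h]
    by_cases h' : NoZZ (2 * N) ω
    · rw [Set.indicator_of_mem (Set.mem_inter (mem_Ho_of_noZZ h h') h), phi, if_pos h', wF,
        weight_eq hx.ne' ht.ne' h, ENNReal.ofReal_prod_of_nonneg fun n _ => gw_nonneg hx ht n _]
    · rw [Set.indicator_of_notMem, phi, if_neg h']
      exact fun hh => h' fun n _ => hh.1.1 n
  · rw [Set.indicator_of_notMem h, Set.indicator_of_notMem fun hh => h hh.2]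

/-- `Ho` is the increasing union of the sets `Ho ∩ Gs (2N)`, so the sum over `Ho` is the limit of
the sums over these sets. -/
lemma tsum_Ho {x t L : ℝ} (hx0 : 0 < x) (hx1 : x < 1) (ht : 0 < t)
    (hL : Tendsto (fun N : ℕ => (ab x t (2 * N)).1 + (ab x t (2 * N)).2) atTop (𝓝 L)) :
    ∑' ω : Ho, wF x t ω.1 = ENNReal.ofReal L := by
  have hC : ∀ N, ∑' ω, (Ho ∩ Gs (2 * N)).indicator (wF x t) ω =
      ENNReal.ofReal ((ab x t (2 * N)).1 + (ab x t (2 * N)).2) := by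
    intro N
    have hn := ab_nonneg hx0 hx1 ht (2 * N)
    have hs := sAB_eq hx0 hx1 ht (2 * N)
    rw [← tsum_phi hx0 ht, ← sA_add_sB, hs.1, hs.2, ← ENNReal.ofReal_add hn.1 hn.2]
  have hT := (ENNReal.continuous_ofReal.tendsto L).comp hL
  refine le_antisymm ?_ ?_
  · rw [ENNReal.tsum_eq_iSup_sum]
    refine iSup_le fun s => ge_of_tendsto hT ?_
    have hev : ∀ᶠ N : ℕ in atTop, ∀ ω ∈ s, ω.1 ∈ Gs (2 * N) := by
      rw [Filter.eventually_all_finset]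
      intro ω _
      obtain ⟨m, hm⟩ := exists_Gs ω.2
      exact (eventually_ge_atTop m).mono fun N hN => Gs_mono (by omega) hm
    filter_upwards [hev] with N hN
    rw [Function.comp, ← hC N]
    calc ∑ ω ∈ s, wF x t ω.1 = ∑ ω ∈ s, (Ho ∩ Gs (2 * N)).indicator (wF x t) ω.1 :=
          Finset.sum_congr rfl fun ω hω => by
            rw [Set.indicator_of_mem (Set.mem_inter ω.2 (hN ω hω))]
      _ ≤ ∑' ω : Ho, (Ho ∩ Gs (2 * N)).indicator (wF x t) ω.1 := ENNReal.sum_le_tsum s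
      _ ≤ _ := ENNReal.tsum_comp_le_tsum_of_injective Subtype.val_injective _
  · refine le_of_tendsto hT (Eventually.of_forall fun N => ?_)
    rw [Function.comp, ← hC N, tsum_subtype Ho (wF x t)]
    exact ENNReal.tsum_le_tsum fun ω =>
      Set.indicator_le_indicator_of_subset Set.inter_subset_left (fun _ => zero_le) ω

/-! ### The evaluation of `Sodd` -/

theorem statement6 (q : ℝ) (hq0 : 0 < q) (hq1 : q < 1) :
    Multipliable (fun j : ℕ => 1 - q ^ (2 * (j + 1))) ∧
    Sodd (q ^ 4) (q + q⁻¹) = ((1 + q ^ 2) * ∏' j : ℕ, (1 - q ^ (2 * (j + 1))))⁻¹ := by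
  have h2 : ∀ k : ℕ, k ≠ 0 → 0 < q ^ k ∧ q ^ k < 1 := fun k hk =>
    ⟨by positivity, pow_lt_one₀ hq0.le hq1 hk⟩
  obtain ⟨y0, y1⟩ := h2 2 (by norm_num)
  obtain ⟨x0, x1⟩ := h2 4 (by norm_num)
  have ht : 0 < q + q⁻¹ := by positivity
  simp only [pow_mul q 2]
  refine ⟨multipliable_one_sub y0 y1, ?_⟩
  change _ = ((1 + q ^ 2) * qInf (q ^ 2))⁻¹
  have hlim : Tendsto (fun N : ℕ => (ab (q ^ 4) (q + q⁻¹) (2 * N)).1 +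
      (ab (q ^ 4) (q + q⁻¹) (2 * N)).2) atTop (𝓝 ((1 + q ^ 2) * qInf (q ^ 2))⁻¹) := by
    have hpow : Tendsto (fun N : ℕ => 1 - (q ^ 4) ^ (2 * N + 1)) atTop (𝓝 (1 - 0)) :=
      ((tendsto_pow_atTop_nhds_zero_of_lt_one x0.le x1).comp
        (tendsto_atTop_mono (fun N => by simp; omega) tendsto_id :
          Tendsto (fun N : ℕ => 2 * N + 1) atTop atTop)).const_sub 1
    have h := (hpow.mul (bT_four_tendsto hq0 hq1)).const_mul (q + q⁻¹)⁻¹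
    rw [sub_zero, one_mul, inv_mul_cancel_left₀ ht.ne'] at h
    refine h.congr fun N => ?_
    rw [← (ab_formula hq0 x0 x1 rfl N).2, inv_mul_cancel_left₀ ht.ne']
  have hS := tsum_Ho x0 x1 ht hlim
  have hpos : 0 ≤ ((1 + q ^ 2) * qInf (q ^ 2))⁻¹ := by
    have := qInf_pos y0 y1
    positivity
  rw [Sodd, ← ENNReal.toReal_ofReal hpos, ← hS, ENNReal.tsum_toReal_eq]
  · refine tsum_congr fun ω => ?_
    rw [wF, ENNReal.toReal_ofReal]
    positivity
  · intro ω
    exact ENNReal.ofReal_ne_top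
end

section
/- For all real numbers q, z with 0 < q < 1 and z > 0, one has 2·S_even(q,2)·Σ_{ℓ∈ℤ} q^{ℓ(ℓ+1)} z^{2ℓ} = Π_{i≥1} ((1 + q^{i}z)(1 + q^{i−1}z⁻¹))² + Π_{i≥1} ((1 − q^{i}z)(1 − q^{i−1}z⁻¹))², where the sum over ℓ and the infinite products converge absolutely. -/
/-!
Write `(q)_n = ∏_{i=1}^n (1 - q^i)`. Both sides are evaluated in terms of theta series.

**The sum over `He`.** Read `ω_{-i}` as the gap between the `i`-th and the `(i+1)`-st particle of a
configuration with at most two particles per site; `B(ω)` is then the number of particles alone at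
their site. For the sequences that equal the ground state after index `2M`, removing the last
occupied site gives a two-term recursion in the number `n` of particles, which at `t = 2` is the
one satisfied by the coefficients of `∏_{i ≥ 1} (1 + q^i x)^2` (`convCoeff_rec`, `hasSum_weight`). Hence
the partial sum over these sequences is `∑_k q^(k^2) / ((q)_{M+k} (q)_{M-k})`. As `M → ∞` these
sets exhaust `He`, so `S_even(q, 2) = (q)_∞⁻² ∑_k q^(k^2)` (`seven_eq`).

**The products.** The Jacobi triple product (`triple_product`), obtained by dominated convergence
from its finite version (`hasSum_tripleCoeff`), turns the right-hand side into
`(q)_∞⁻² (θ(z)^2 + θ(-z)^2)` with `θ(z) = ∑_n q^(n(n+1)/2) z^n`. In the squares the terms `(n, m)`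
with `n + m` odd cancel, and `n = l + k`, `m = l - k` factors what remains as
`2 ∑_k q^(k^2) ∑_l q^(l(l+1)) z^(2l)` (`theta_sq_add`).

Everything is expressed through `s = √q`, so that `q^(n(n+1)/2) = s^(n(n+1))`.
-/


open scoped BigOperators

open Filter Topology

namespace EvenTheta

/-! ### Euler products and theta series -/

/-- The finite Euler product `(q; q)_n = ∏_{i=1}^n (1 - q^i)`. -/
noncomputable def euler (q : ℝ) (n : ℕ) : ℝ := ∏ i ∈ Finset.range n, (1 - q ^ (i + 1))

/-- The infinite Euler product `(q; q)_∞`. -/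
noncomputable def eulerInf (q : ℝ) : ℝ := ∏' i : ℕ, (1 - q ^ (i + 1))

/-- `1 / (q; q)_j` for `j : ℤ`, extended by `0` to negative `j`. -/
noncomputable def recip (q : ℝ) : ℤ → ℝ
  | Int.ofNat n => (euler q n)⁻¹
  | Int.negSucc _ => 0

lemma recip_natCast (q : ℝ) (n : ℕ) : recip q (n : ℤ) = (euler q n)⁻¹ := rfl

lemma recip_of_neg (q : ℝ) {j : ℤ} (hj : j < 0) : recip q j = 0 := by
  obtain ⟨n, rfl⟩ := Int.eq_negSucc_of_lt_zero hj
  rfl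

section

variable {q : ℝ} (hq0 : 0 < q) (hq1 : q < 1)
include hq0 hq1

lemma factor_pos (i : ℕ) : 0 < 1 - q ^ (i + 1) := by
  have := pow_lt_one₀ hq0.le hq1 (Nat.succ_ne_zero i)
  simpa using this

lemma euler_pos (n : ℕ) : 0 < euler q n :=
  Finset.prod_pos fun i _ => factor_pos hq0 hq1 i

lemma euler_antitone : Antitone (euler q) := by
  refine antitone_nat_of_succ_le fun n => ?_
  rw [euler, Finset.prod_range_succ]
  refine mul_le_of_le_one_right (euler_pos hq0 hq1 n).le ?_
  have : 0 < q ^ (n + 1) := by positivity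
  linarith

lemma summable_geom_succ : Summable fun i : ℕ => q ^ (i + 1) :=
  (summable_nat_add_iff 1).2 (summable_geometric_of_lt_one hq0.le hq1)

lemma tendsto_euler : Tendsto (euler q) atTop (𝓝 (eulerInf q)) := by
  have : Multipliable fun i : ℕ => 1 - q ^ (i + 1) := by
    simpa [sub_eq_add_neg] using
      Real.multipliable_one_add_of_summable (summable_geom_succ hq0 hq1).neg
  exact this.hasProd.tendsto_prod_nat

lemma eulerInf_le (n : ℕ) : eulerInf q ≤ euler q n :=
  (euler_antitone hq0 hq1).le_of_tendsto (tendsto_euler hq0 hq1) n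

lemma eulerInf_pos : 0 < eulerInf q := by
  refine lt_of_le_of_ne (ge_of_tendsto' (tendsto_euler hq0 hq1) fun n =>
    (euler_pos hq0 hq1 n).le) (Ne.symm ?_)
  have h := tprod_one_add_ne_zero_of_summable (f := fun i : ℕ => -q ^ (i + 1))
    (fun i => by have := factor_pos hq0 hq1 i; linarith)
    (by simpa [abs_of_pos hq0] using summable_geom_succ hq0 hq1)
  simpa [eulerInf, sub_eq_add_neg] using h

lemma recip_nonneg (j : ℤ) : 0 ≤ recip q j := by
  cases j with
  | ofNat n => exact inv_nonneg.2 (euler_pos hq0 hq1 n).le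
  | negSucc n => exact le_rfl

lemma recip_le (j : ℤ) : recip q j ≤ (eulerInf q)⁻¹ := by
  cases j with
  | ofNat n => exact inv_anti₀ (eulerInf_pos hq0 hq1) (eulerInf_le hq0 hq1 n)
  | negSucc n => exact inv_nonneg.2 (eulerInf_pos hq0 hq1).le

/-- Setting `1 / (q; q)_j = 0` for `j < 0` makes this recursion valid at every integer. -/
lemma recip_sub_one (j : ℤ) : recip q (j - 1) = (1 - q ^ j) * recip q j := by
  rcases lt_trichotomy j 0 with h | rfl | h
  · rw [recip_of_neg q h, recip_of_neg q (by lia), mul_zero]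
  · rw [recip_of_neg q (by lia)]; simp
  · obtain ⟨n, rfl⟩ : ∃ n : ℕ, j = (n + 1 : ℕ) := ⟨(j - 1).toNat, by lia⟩
    have h1 : ((n + 1 : ℕ) : ℤ) - 1 = (n : ℤ) := by push_cast; ring
    rw [h1, recip_natCast, recip_natCast, euler, euler, Finset.prod_range_succ, zpow_natCast]
    have := (factor_pos hq0 hq1 n).ne'
    have := (euler_pos hq0 hq1 n).ne'
    rw [euler] at this
    field_simp

lemma tendsto_recip (k : ℤ) :
    Tendsto (fun M : ℕ => recip q (M + k)) atTop (𝓝 (eulerInf q)⁻¹) := by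
  have h1 : Tendsto (fun M : ℕ => ((M : ℤ) + k).toNat) atTop atTop := by
    refine tendsto_atTop.2 fun b => ?_
    filter_upwards [eventually_ge_atTop (b + k.natAbs)] with M hM
    lia
  have h2 := ((tendsto_euler hq0 hq1).inv₀ (eulerInf_pos hq0 hq1).ne').comp h1
  refine h2.congr' ?_
  filter_upwards [eventually_ge_atTop k.natAbs] with M hM
  have : (M : ℤ) + k = (((M : ℤ) + k).toNat : ℤ) := by lia
  rw [this, recip_natCast]
  simp

end

lemma summable_theta_nat {s w : ℝ} (hs0 : 0 < s) (hs1 : s < 1) (hw : 0 < w) :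
    Summable fun n : ℕ => s ^ (n * n) * w ^ n := by
  refine summable_of_ratio_test_tendsto_lt_one (l := 0) one_pos
    (Eventually.of_forall fun n => by positivity) ?_
  have h : Tendsto (fun n : ℕ => (s ^ n) ^ 2 * (s * w)) atTop (𝓝 (0 ^ 2 * (s * w))) :=
    ((tendsto_pow_atTop_nhds_zero_of_lt_one hs0.le hs1).pow 2).mul_const _
  simp only [ne_eq, OfNat.ofNat_ne_zero, not_false_eq_true, zero_pow, zero_mul] at h
  refine h.congr fun n => ?_
  rw [Real.norm_of_nonneg (by positivity), Real.norm_of_nonneg (by positivity),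
    eq_div_iff (by positivity)]
  ring

lemma summable_theta {s w : ℝ} (hs0 : 0 < s) (hs1 : s < 1) (hw : 0 < w) :
    Summable fun n : ℤ => s ^ (n * (n + 1)) * w ^ n := by
  refine Summable.of_nat_of_neg ?_ ?_
  · refine (summable_theta_nat hs0 hs1 (mul_pos hs0 hw)).congr fun n => ?_
    rw [mul_pow, ← mul_assoc, ← pow_add]
    have : (n : ℤ) * (n + 1) = ((n * n + n : ℕ) : ℤ) := by push_cast; ring
    rw [this, zpow_natCast, zpow_natCast]
  · refine (summable_theta_nat hs0 hs1 (div_pos (inv_pos.2 hs0) hw)).congr fun n => ?_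
    have : (-(n : ℤ)) * (-n + 1) = ((n * n : ℕ) : ℤ) - (n : ℕ) := by push_cast; ring
    rw [this, zpow_sub₀ hs0.ne', zpow_natCast, zpow_natCast, zpow_neg, zpow_natCast,
      div_pow, inv_pow]
    field_simp

/-! ### The Jacobi triple product -/

/-- The coefficient of `z ^ k` in `∏_{i=1}^M (1 + q^i z)(1 + q^(i-1) z⁻¹)`, where `q = s ^ 2`:
`q^(k(k+1)/2)` times the Gaussian binomial `[2M, M + k]`. Working with the square root `s` of `q`
avoids halving `k(k+1)`. -/
noncomputable def tripleCoeff (s : ℝ) (M : ℕ) (k : ℤ) : ℝ :=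
  s ^ (k * (k + 1)) * (euler (s ^ 2) (2 * M) * (recip (s ^ 2) (M + k) * recip (s ^ 2) (M - k)))

section

variable {s : ℝ} (hs0 : 0 < s) (hs1 : s < 1)
include hs0 hs1

lemma tripleCoeff_succ (M : ℕ) (k : ℤ) :
    tripleCoeff s (M + 1) k = (1 + (s ^ 2) ^ (2 * M + 1)) * tripleCoeff s M k
      + (s ^ 2) ^ (M + 1) * tripleCoeff s M (k - 1) + (s ^ 2) ^ M * tripleCoeff s M (k + 1) := by
  have hq0 : 0 < s ^ 2 := by positivity
  have hq1 : s ^ 2 < 1 := pow_lt_one₀ hs0.le hs1 two_ne_zero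
  have hE : euler (s ^ 2) (2 * (M + 1))
      = euler (s ^ 2) (2 * M) * (1 - (s ^ 2) ^ (2 * M + 1)) * (1 - (s ^ 2) ^ (2 * M + 2)) := by
    rw [euler, euler, show 2 * (M + 1) = 2 * M + 1 + 1 by ring, Finset.prod_range_succ,
      Finset.prod_range_succ]
  have hz1 : s ^ ((k - 1) * (k - 1 + 1)) = s ^ (k * (k + 1)) * ((s ^ 2) ^ k)⁻¹ := by
    rw [← zpow_natCast s 2, ← zpow_mul, ← zpow_neg, ← zpow_add₀ hs0.ne']
    congr 1; push_cast; ring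
  have hz2 : s ^ ((k + 1) * (k + 1 + 1)) = s ^ (k * (k + 1)) * ((s ^ 2) ^ k * s ^ 2) := by
    rw [← zpow_add_one₀ hq0.ne', ← zpow_natCast s 2, ← zpow_mul, ← zpow_add₀ hs0.ne']
    congr 1; push_cast; ring
  simp only [tripleCoeff, hE, hz1, hz2]
  generalize hq : s ^ 2 = q at *
  have ra := recip_sub_one hq0 hq1 (M + k + 1)
  have ra' := recip_sub_one hq0 hq1 (M + k)
  have rb := recip_sub_one hq0 hq1 (M - k + 1)
  have rb' := recip_sub_one hq0 hq1 (M - k)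
  have e1 : ((M + 1 : ℕ) : ℤ) + k = M + k + 1 := by push_cast; ring
  have e2 : ((M + 1 : ℕ) : ℤ) - k = M - k + 1 := by push_cast; ring
  have e3 : (M : ℤ) + (k - 1) = M + k - 1 := by ring
  have e4 : (M : ℤ) - (k - 1) = M - k + 1 := by ring
  have e5 : (M : ℤ) + (k + 1) = M + k + 1 := by ring
  have e6 : (M : ℤ) - (k + 1) = M - k - 1 := by ring
  rw [add_sub_cancel_right] at ra rb
  rw [e1, e2, e3, e4, e5, e6, ra', rb', ra, rb]
  rw [zpow_add_one₀ hq0.ne', zpow_add_one₀ hq0.ne', zpow_add₀ hq0.ne', zpow_sub₀ hq0.ne',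
    zpow_natCast]
  have : q ^ k ≠ 0 := zpow_ne_zero _ hq0.ne'
  field_simp
  ring

/-- The finite form of the triple product identity. -/
lemma hasSum_tripleCoeff {z : ℝ} (hz : z ≠ 0) (M : ℕ) :
    HasSum (fun k : ℤ => tripleCoeff s M k * z ^ k)
      (∏ i ∈ Finset.range M, ((1 + (s ^ 2) ^ (i + 1) * z) * (1 + (s ^ 2) ^ i * z⁻¹))) := by
  induction M with
  | zero =>
    have h := hasSum_single (f := fun k : ℤ => tripleCoeff s 0 k * z ^ k) 0 ?_
    · convert h using 1
      simp [tripleCoeff, recip, euler]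
    · intro k hk
      rcases lt_or_gt_of_ne hk with h | h
      · simp [tripleCoeff, recip_of_neg _ h]
      · simp [tripleCoeff, recip_of_neg _ (neg_lt_zero.2 h)]
  | succ M ih =>
    have h1 := (Equiv.addRight (-1 : ℤ)).hasSum_iff.2 ih
    have h2 := (Equiv.addRight (1 : ℤ)).hasSum_iff.2 ih
    have h := ((ih.mul_left (1 + (s ^ 2) ^ (2 * M + 1))).add
      (h1.mul_left ((s ^ 2) ^ (M + 1) * z))).add (h2.mul_left ((s ^ 2) ^ M * z⁻¹))
    refine (congrArg₂ (fun f a => HasSum f a) ?_ ?_).mpr h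
    · funext k
      simp only [Function.comp_apply, Equiv.coe_addRight, tripleCoeff_succ hs0 hs1,
        ← sub_eq_add_neg, zpow_sub_one₀ hz, zpow_add_one₀ hz]
      field_simp
    · rw [Finset.prod_range_succ]
      generalize (∏ i ∈ Finset.range M,
        ((1 + (s ^ 2) ^ (i + 1) * z) * (1 + (s ^ 2) ^ i * z⁻¹))) = p
      field_simp
      ring

lemma multipliable_triple (z : ℝ) :
    Multipliable fun i : ℕ => (1 + (s ^ 2) ^ (i + 1) * z) * (1 + (s ^ 2) ^ i * z⁻¹) := by
  have hq0 : 0 < s ^ 2 := by positivity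
  have hq1 : s ^ 2 < 1 := pow_lt_one₀ hs0.le hs1 two_ne_zero
  exact (Real.multipliable_one_add_of_summable ((summable_geom_succ hq0 hq1).mul_right z)).mul
    (Real.multipliable_one_add_of_summable
      ((summable_geometric_of_lt_one hq0.le hq1).mul_right z⁻¹))

lemma summable_norm_theta {z : ℝ} (hz : z ≠ 0) :
    Summable fun n : ℤ => ‖s ^ (n * (n + 1)) * z ^ n‖ := by
  refine (summable_theta hs0 hs1 (abs_pos.2 hz)).congr fun n => ?_
  rw [norm_mul, norm_zpow, norm_zpow, Real.norm_of_nonneg hs0.le, Real.norm_eq_abs]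

/-- The Jacobi triple product identity, by dominated convergence in its finite form. -/
lemma triple_product {z : ℝ} (hz : z ≠ 0) :
    ∏' i : ℕ, ((1 + (s ^ 2) ^ (i + 1) * z) * (1 + (s ^ 2) ^ i * z⁻¹))
      = (eulerInf (s ^ 2))⁻¹ * ∑' n : ℤ, s ^ (n * (n + 1)) * z ^ n := by
  have hq0 : 0 < s ^ 2 := by positivity
  have hq1 : s ^ 2 < 1 := pow_lt_one₀ hs0.le hs1 two_ne_zero
  have hE := eulerInf_pos hq0 hq1
  have h1 := (multipliable_triple hs0 hs1 z).hasProd.tendsto_prod_nat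
  have h2 : Tendsto (fun M : ℕ => ∑' k : ℤ, tripleCoeff s M k * z ^ k) atTop
      (𝓝 (∑' k : ℤ, (eulerInf (s ^ 2))⁻¹ * (s ^ (k * (k + 1)) * z ^ k))) := by
    refine tendsto_tsum_of_dominated_convergence
      (bound := fun k => ((eulerInf (s ^ 2))⁻¹ * (eulerInf (s ^ 2))⁻¹)
        * ‖s ^ (k * (k + 1)) * z ^ k‖)
      ((summable_norm_theta hs0 hs1 hz).mul_left _) (fun k => ?_) (Eventually.of_forall ?_)
    · have t1 := (tendsto_euler hq0 hq1).comp
        (tendsto_id.const_mul_atTop' (show 0 < 2 by norm_num))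
      have t := ((t1.mul ((tendsto_recip hq0 hq1 k).mul
        (tendsto_recip hq0 hq1 (-k)))).const_mul (s ^ (k * (k + 1)))).mul_const (z ^ k)
      have hlim : (eulerInf (s ^ 2))⁻¹ * (s ^ (k * (k + 1)) * z ^ k) = s ^ (k * (k + 1)) *
          (eulerInf (s ^ 2) * ((eulerInf (s ^ 2))⁻¹ * (eulerInf (s ^ 2))⁻¹)) * z ^ k := by
        field_simp
      rw [hlim]
      exact t
    · intro M k
      have he1 : euler (s ^ 2) (2 * M) ≤ 1 := by
        simpa [euler] using euler_antitone hq0 hq1 (Nat.zero_le (2 * M))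
      have hr : euler (s ^ 2) (2 * M) * (recip (s ^ 2) (M + k) * recip (s ^ 2) (M - k))
          ≤ (eulerInf (s ^ 2))⁻¹ * (eulerInf (s ^ 2))⁻¹ := by
        have hm := mul_le_mul (recip_le hq0 hq1 (M + k)) (recip_le hq0 hq1 (M - k))
          (recip_nonneg hq0 hq1 _) (inv_nonneg.2 hE.le)
        exact (mul_le_of_le_one_left (mul_nonneg (recip_nonneg hq0 hq1 _)
          (recip_nonneg hq0 hq1 _)) he1).trans hm
      have hr0 : 0 ≤ euler (s ^ 2) (2 * M) * (recip (s ^ 2) (M + k) * recip (s ^ 2) (M - k)) :=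
        mul_nonneg (euler_pos hq0 hq1 _).le
          (mul_nonneg (recip_nonneg hq0 hq1 _) (recip_nonneg hq0 hq1 _))
      rw [tripleCoeff, mul_comm (s ^ (k * (k + 1))), mul_assoc, norm_mul,
        Real.norm_of_nonneg hr0]
      exact mul_le_mul_of_nonneg_right hr (norm_nonneg _)
  rw [tsum_mul_left] at h2
  refine tendsto_nhds_unique h1 (h2.congr fun M => ?_)
  exact (hasSum_tripleCoeff hs0 hs1 hz M).tsum_eq

end

/-! ### The convolution recursion -/

/-- `q^(j(j+1)/2) / (q; q)_j` with `q = s ^ 2`, zero for `j < 0`; these are the coefficients of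
`∏_{i ≥ 1} (1 + q^i x)`. -/
noncomputable def eCoeff (s : ℝ) (j : ℤ) : ℝ := s ^ (j * (j + 1)) * recip (s ^ 2) j

/-- The coefficient of `x ^ n` in `∏_{i ≥ 1} (1 + q^i x)^2`, where `q = s ^ 2`. -/
noncomputable def convCoeff (s : ℝ) (n : ℤ) : ℝ := ∑' k : ℤ, eCoeff s k * eCoeff s (n - k)

lemma eCoeff_of_neg (s : ℝ) {j : ℤ} (hj : j < 0) : eCoeff s j = 0 := by
  rw [eCoeff, recip_of_neg _ hj, mul_zero]

lemma convCoeff_hasSum (s : ℝ) (n : ℤ) :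
    HasSum (fun k : ℤ => eCoeff s k * eCoeff s (n - k)) (convCoeff s n) := by
  refine (summable_of_ne_finset_zero (s := Finset.Icc 0 n) fun k hk => ?_).hasSum
  rw [Finset.mem_Icc, not_and_or] at hk
  rcases hk with h | h
  · rw [eCoeff_of_neg s (by lia), zero_mul]
  · rw [eCoeff_of_neg s (j := n - k) (by lia), mul_zero]

lemma convCoeff_of_neg (s : ℝ) {n : ℤ} (hn : n < 0) : convCoeff s n = 0 := by
  refine (convCoeff_hasSum s n).unique (hasSum_zero.congr_fun fun k => ?_)
  rcases lt_or_ge k 0 with h | h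
  · rw [eCoeff_of_neg s h, zero_mul]
  · rw [eCoeff_of_neg s (j := n - k) (by lia), mul_zero]

lemma convCoeff_zero (s : ℝ) : convCoeff s 0 = 1 := by
  have h := hasSum_single (f := fun k : ℤ => eCoeff s k * eCoeff s (0 - k)) 0 ?_
  · rw [(convCoeff_hasSum s 0).unique h]
    simp [eCoeff, recip, euler]
  · intro k hk
    rcases lt_or_gt_of_ne hk with h | h
    · rw [eCoeff_of_neg s h, zero_mul]
    · rw [eCoeff_of_neg s (j := 0 - k) (by lia), mul_zero]

section

variable {s : ℝ} (hs0 : 0 < s) (hs1 : s < 1)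
include hs0 hs1

lemma eCoeff_eq (j : ℤ) : eCoeff s j = (s ^ 2) ^ j * (eCoeff s j + eCoeff s (j - 1)) := by
  have hq0 : 0 < s ^ 2 := by positivity
  have hq1 : s ^ 2 < 1 := pow_lt_one₀ hs0.le hs1 two_ne_zero
  have hz : s ^ (j * (j + 1)) = s ^ ((j - 1) * (j - 1 + 1)) * (s ^ 2) ^ j := by
    rw [← zpow_natCast s 2, ← zpow_mul, ← zpow_add₀ hs0.ne']
    congr 1; push_cast; ring
  rw [eCoeff, eCoeff, recip_sub_one hq0 hq1, hz]
  ring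

/-- The coefficient form of the functional equation `G(x) = (1 + q x)^2 G(q x)` of
`G(x) = ∏_{i ≥ 1} (1 + q^i x)^2`. -/
lemma convCoeff_rec (n : ℤ) :
    (1 - (s ^ 2) ^ n) * convCoeff s n = (s ^ 2) ^ n * (2 * convCoeff s (n - 1) + convCoeff s (n - 2)) := by
  have hq0 : 0 < s ^ 2 := by positivity
  have h1 := (Equiv.addRight (-1 : ℤ)).hasSum_iff.2 (convCoeff_hasSum s (n - 1))
  have h2 := (Equiv.addRight (-1 : ℤ)).hasSum_iff.2 (convCoeff_hasSum s (n - 2))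
  have h := (((convCoeff_hasSum s n).add (convCoeff_hasSum s (n - 1))).add (h1.add h2)).mul_left
    ((s ^ 2) ^ n)
  have key := (convCoeff_hasSum s n).unique (h.congr_fun fun k => ?_)
  · linear_combination key
  · simp only [Function.comp_apply, Equiv.coe_addRight]
    rw [show n - 1 - (k + -1) = n - k by ring, show n - 2 - (k + -1) = n - k - 1 by ring,
      show n - 1 - k = n - k - 1 by ring, ← sub_eq_add_neg,
      show (s ^ 2) ^ n = (s ^ 2) ^ k * (s ^ 2) ^ (n - k) by
        rw [← zpow_add₀ hq0.ne']; congr 1; ring]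
    have e1 := eCoeff_eq hs0 hs1 k
    have e2 := eCoeff_eq hs0 hs1 (n - k)
    calc eCoeff s k * eCoeff s (n - k)
        = ((s ^ 2) ^ k * (eCoeff s k + eCoeff s (k - 1))) *
          ((s ^ 2) ^ (n - k) * (eCoeff s (n - k) + eCoeff s (n - k - 1))) := by
          rw [← e1, ← e2]
      _ = _ := by ring

end

/-! ### Gap sequences of finitely many particles -/

/-- The sequence which is `1` at even `i = k + 1` and `0` at odd `i`. -/
def ground (k : ℕ) : ℕ := if (k + 1) % 2 = 0 then 1 else 0

/-- Sequences that agree with `ground` from index `n` on, whose first `n` entries contain no two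
consecutive zeros, and whose `n`-th entry (index `n - 1`, if `n > 0`) is nonzero. The first `n`
entries are the gaps to the right of each of `n` particles, at most two of them at a site. -/
def gapSet (n : ℕ) : Set (ℕ → ℕ) :=
  {ω | (∀ k, k + 1 < n → ¬(ω k = 0 ∧ ω (k + 1) = 0)) ∧ (∀ k, k + 1 = n → ω k ≠ 0) ∧
    ∀ k, n ≤ k → ω k = ground k}

/-- The weight `q^(∑ i ω_{-i}) 2^(# of particles alone at their site)` over the first `n` entries.
Each vanishing gap joins two particles into a pair, which explains the factor `1 / 4`. -/
noncomputable def weight (q : ℝ) (n : ℕ) (ω : ℕ → ℕ) : ℝ :=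
  ∏ k ∈ Finset.range n, (2 * q ^ ((k + 1) * ω k) * if ω k = 0 then 1 / 4 else 1)

/-- Adjoin a single particle, followed by the gap `m + 1`. -/
def addOne (n : ℕ) (x : gapSet n × ℕ) : ℕ → ℕ := Function.update x.1.1 n (x.2 + 1)

/-- Adjoin a pair of particles at a common site, followed by the gap `m + 1`. -/
def addTwo (n : ℕ) (x : gapSet n × ℕ) : ℕ → ℕ :=
  Function.update (Function.update x.1.1 n 0) (n + 1) (x.2 + 1)

lemma addOne_injective (n : ℕ) : Function.Injective (addOne n) := by
  rintro ⟨⟨ω, h1, h2, h3⟩, m⟩ ⟨⟨ω', h1', h2', h3'⟩, m'⟩ h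
  have hm : m = m' := by simpa [addOne] using congrFun h n
  have hω : ω = ω' := by
    funext k
    by_cases hk : k = n
    · rw [h3 k hk.ge, h3' k hk.ge]
    · simpa [addOne, hk] using congrFun h k
  subst hm hω
  rfl

lemma addTwo_injective (n : ℕ) : Function.Injective (addTwo n) := by
  rintro ⟨⟨ω, h1, h2, h3⟩, m⟩ ⟨⟨ω', h1', h2', h3'⟩, m'⟩ h
  have hm : m = m' := by simpa [addTwo] using congrFun h (n + 1)
  have hω : ω = ω' := by
    funext k
    by_cases hk : n ≤ k
    · rw [h3 k hk, h3' k hk]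
    · have := congrFun h k
      simpa [addTwo, show k ≠ n by lia, show k ≠ n + 1 by lia] using this
  subst hm hω
  rfl

lemma range_addOne (n : ℕ) :
    Set.range (addOne n) = {ω | ω ∈ gapSet (n + 1) ∧ ∀ k, k + 1 = n → ω k ≠ 0} := by
  ext ω
  constructor
  · rintro ⟨⟨⟨ω, h1, h2, h3⟩, m⟩, rfl⟩
    refine ⟨⟨fun k hk => ?_, fun k hk => ?_, fun k hk => ?_⟩, fun k hk => ?_⟩
    · rcases Nat.lt_or_ge (k + 1) n with h | h
      · simpa [addOne, show k ≠ n by lia, show k + 1 ≠ n by lia] using h1 k h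
      · simp [addOne, show k + 1 = n by lia]
    · simp [addOne, show k = n by lia]
    · simpa [addOne, show k ≠ n by lia] using h3 k (by lia)
    · simpa [addOne, show k ≠ n by lia] using h2 k hk
  · rintro ⟨⟨h1, h2, h3⟩, h4⟩
    refine ⟨⟨⟨Function.update ω n (ground n), fun k hk => ?_, fun k hk => ?_, fun k hk => ?_⟩,
      ω n - 1⟩, ?_⟩
    · simpa [show k ≠ n by lia, show k + 1 ≠ n by lia] using h1 k (by lia)
    · simpa [show k ≠ n by lia] using h4 k hk
    · by_cases hkn : k = n
      · simp [hkn]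
      · simpa [hkn] using h3 k (by lia)
    · have := h2 n rfl
      simp [addOne, show ω n - 1 + 1 = ω n by lia]

lemma range_addTwo (n : ℕ) :
    Set.range (addTwo n) = {ω | ω ∈ gapSet (n + 2) ∧ ω n = 0} := by
  ext ω
  constructor
  · rintro ⟨⟨⟨ω, h1, h2, h3⟩, m⟩, rfl⟩
    refine ⟨⟨fun k hk => ?_, fun k hk => ?_, fun k hk => ?_⟩, ?_⟩
    · rcases Nat.lt_or_ge (k + 1) n with h | h
      · simpa [addTwo, show k ≠ n by lia, show k + 1 ≠ n by lia, show k ≠ n + 1 by lia]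
          using h1 k h
      · rcases Nat.eq_or_lt_of_le h with h | h
        · have := h2 k h.symm
          simp [addTwo, this, show k ≠ n by lia, show k ≠ n + 1 by lia]
        · simp [addTwo, show k = n by lia]
    · simp [addTwo, show k = n + 1 by lia]
    · simpa [addTwo, show k ≠ n by lia, show k ≠ n + 1 by lia] using h3 k (by lia)
    · simp [addTwo]
  · rintro ⟨⟨h1, h2, h3⟩, h4⟩
    refine ⟨⟨⟨Function.update (Function.update ω n (ground n)) (n + 1) (ground (n + 1)),
      fun k hk => ?_, fun k hk => ?_, fun k hk => ?_⟩, ω (n + 1) - 1⟩, ?_⟩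
    · simpa [show k ≠ n by lia, show k + 1 ≠ n by lia, show k ≠ n + 1 by lia] using h1 k (by lia)
    · have := h1 k (by lia)
      subst hk
      rw [h4] at this
      simpa [show k ≠ k + 1 + 1 by lia] using this
    · by_cases hkn : k = n
      · simp [hkn]
      · by_cases hkn' : k = n + 1
        · simp [hkn']
        · simpa [hkn, hkn'] using h3 k (by lia)
    · have := h2 (n + 1) rfl
      funext k
      by_cases hkn' : k = n + 1
      · subst hkn'; simp [addTwo]; lia
      · by_cases hkn : k = n
        · subst hkn; simp [addTwo, h4]
        · simp [addTwo, hkn, hkn']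

lemma weight_addOne (q : ℝ) (n : ℕ) (x : gapSet n × ℕ) :
    weight q (n + 1) (addOne n x) = weight q n x.1 * (2 * (q ^ (n + 1)) ^ (x.2 + 1)) := by
  rw [weight, Finset.prod_range_succ, weight]
  congr 1
  · refine Finset.prod_congr rfl fun k hk => ?_
    rw [Finset.mem_range] at hk
    simp [addOne, hk.ne]
  · simp [addOne, ← pow_mul]

lemma weight_addTwo (q : ℝ) (n : ℕ) (x : gapSet n × ℕ) :
    weight q (n + 2) (addTwo n x) = weight q n x.1 * (q ^ (n + 2)) ^ (x.2 + 1) := by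
  rw [weight, Finset.prod_range_succ, Finset.prod_range_succ, weight, mul_assoc]
  congr 1
  · refine Finset.prod_congr rfl fun k hk => ?_
    rw [Finset.mem_range] at hk
    simp [addTwo, hk.ne, show k ≠ n + 1 by lia]
  · simp [addTwo, ← pow_mul]
    ring

lemma weight_nonneg {q : ℝ} (hq : 0 ≤ q) (n : ℕ) (ω : ℕ → ℕ) : 0 ≤ weight q n ω :=
  Finset.prod_nonneg fun k _ => by positivity

lemma gapSet_zero : gapSet 0 = {ground} := by
  ext ω
  simp [gapSet, funext_iff]

lemma hasSum_weight_zero (q : ℝ) : HasSum (fun ω : gapSet 0 => weight q 0 ω) 1 := by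
  rw [gapSet_zero]
  simp [weight]

lemma hasSum_geom_succ {x : ℝ} (hx0 : 0 ≤ x) (hx1 : x < 1) :
    HasSum (fun m : ℕ => x ^ (m + 1)) (x / (1 - x)) := by
  simpa [pow_succ', div_eq_mul_inv] using (hasSum_geometric_of_lt_one hx0 hx1).mul_left x

section

variable {q : ℝ} (hq0 : 0 < q) (hq1 : q < 1)
include hq0 hq1

lemma hasSum_addOne {n : ℕ} {a : ℝ}
    (h : HasSum (fun ω : gapSet n => weight q n ω) a) :
    HasSum (weight q (n + 1) ∘ ((↑) : Set.range (addOne n) → ℕ → ℕ))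
      (a * (2 * (q ^ (n + 1) / (1 - q ^ (n + 1))))) := by
  refine (addOne_injective n).hasSum_range_iff.2 ?_
  have hg := (hasSum_geom_succ (x := q ^ (n + 1)) (by positivity)
    (pow_lt_one₀ hq0.le hq1 (by simp))).mul_left 2
  refine (h.mul hg (h.summable.mul_of_nonneg hg.summable
    (fun ω => weight_nonneg hq0.le n ω) fun m => by positivity)).congr_fun fun x => ?_
  exact weight_addOne q n x

lemma hasSum_addTwo {n : ℕ} {a : ℝ}
    (h : HasSum (fun ω : gapSet n => weight q n ω) a) :
    HasSum (weight q (n + 2) ∘ ((↑) : Set.range (addTwo n) → ℕ → ℕ))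
      (a * (q ^ (n + 2) / (1 - q ^ (n + 2)))) := by
  refine (addTwo_injective n).hasSum_range_iff.2 ?_
  have hg := hasSum_geom_succ (x := q ^ (n + 2)) (by positivity)
    (pow_lt_one₀ hq0.le hq1 (by simp))
  refine (h.mul hg (h.summable.mul_of_nonneg hg.summable
    (fun ω => weight_nonneg hq0.le n ω) fun m => by positivity)).congr_fun fun x => ?_
  exact weight_addTwo q n x

end

/-- The partition function of `n` particles. The last site is occupied by one or by two particles,
and removing it yields the recursion `convCoeff_rec`. -/
lemma hasSum_weight {s : ℝ} (hs0 : 0 < s) (hs1 : s < 1) (n : ℕ) :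
    HasSum (fun ω : gapSet n => weight (s ^ 2) n ω) (convCoeff s n) := by
  have hq0 : 0 < s ^ 2 := by positivity
  have hq1 : s ^ 2 < 1 := pow_lt_one₀ hs0.le hs1 two_ne_zero
  induction n using Nat.twoStepInduction with
  | zero =>
    rw [Nat.cast_zero, convCoeff_zero]
    exact hasSum_weight_zero _
  | one =>
    have h := hasSum_addOne hq0 hq1 (hasSum_weight_zero (s ^ 2))
    have hr : Set.range (addOne 0) = gapSet 1 := by
      rw [range_addOne]; ext ω; simp
    rw [hr] at h
    have hc := convCoeff_rec hs0 hs1 1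
    rw [convCoeff_of_neg s (n := 1 - 2) (by lia), sub_self, convCoeff_zero] at hc
    have hp := factor_pos hq0 hq1 0
    refine (congrArg (fun a => HasSum _ a) ?_).mpr h
    rw [zpow_one] at hc
    simp only [zero_add, pow_one] at hp
    simp only [zero_add, pow_one, Nat.cast_one, one_mul]
    field_simp
    linear_combination hc
  | more n ih ih1 =>
    have h1 := hasSum_addOne hq0 hq1 ih1
    have h2 := hasSum_addTwo hq0 hq1 ih
    have hd : Disjoint (Set.range (addOne (n + 1))) (Set.range (addTwo n)) := by
      rw [range_addOne, range_addTwo, Set.disjoint_left]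
      rintro ω ⟨-, h⟩ ⟨-, h'⟩
      exact h n rfl h'
    have hu : Set.range (addOne (n + 1)) ∪ Set.range (addTwo n) = gapSet (n + 2) := by
      rw [range_addOne, range_addTwo]
      ext ω
      by_cases h : ω n = 0 <;> simp [h]
    have h := h1.add_disjoint hd h2
    rw [hu] at h
    have hc := convCoeff_rec hs0 hs1 (n + 2 : ℕ)
    rw [zpow_natCast, show ((n + 2 : ℕ) : ℤ) - 1 = (n + 1 : ℕ) by push_cast; ring,
      show ((n + 2 : ℕ) : ℤ) - 2 = n by push_cast; ring] at hc
    have hp := factor_pos hq0 hq1 (n + 1)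
    refine (congrArg (fun a => HasSum _ a) ?_).mpr h
    rw [show n + 1 + 1 = n + 2 from rfl] at hp ⊢
    generalize (s ^ 2) ^ (n + 2) = x at *
    field_simp
    linear_combination hc

/-! ### The sum over `He` -/

lemma gapSet_subset_He (M : ℕ) : gapSet (2 * M) ⊆ He := by
  rintro ω ⟨h1, h2, h3⟩
  refine ⟨fun n => ?_, 2 * M, fun n hn => h3 n hn⟩
  rcases lt_trichotomy (n + 1) (2 * M) with h | h | h
  · exact h1 n h
  · exact fun h' => h2 n h h'.1
  · rw [h3 n (by lia), h3 (n + 1) (by lia), ground, ground]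
    lia

lemma eventually_mem_gapSet {ω : ℕ → ℕ} (hω : ω ∈ He) : ∀ᶠ M : ℕ in atTop, ω ∈ gapSet (2 * M) := by
  obtain ⟨h1, N, hN⟩ := hω
  filter_upwards [eventually_ge_atTop N] with M hM
  refine ⟨fun k _ => h1 k, fun k hk h0 => h1 k ⟨h0, ?_⟩, fun k hk => hN k (by lia)⟩
  rw [hN (k + 1) (by lia)]
  lia

/-- The summand of `Seven q 2`. -/
noncomputable def summand (q : ℝ) (ω : ℕ → ℕ) : ℝ := q ^ Afun ω * 2 ^ Bfun ω

lemma summand_eq_aux {q : ℝ} (hq0 : 0 < q) (ω : ℕ → ℕ) (M : ℕ) :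
    q ^ (∑ n ∈ Finset.range (2 * M), (if (n + 1) % 2 = 1 then ((n : ℤ) + 1) * (ω n : ℤ)
             else ((n : ℤ) + 1) * ((ω n : ℤ) - 1))) *
      (2 : ℝ) ^ (2 * ((∑ n ∈ Finset.range (2 * M),
          if (n + 1) % 2 = 1 ∧ 1 ≤ ω n then (1 : ℤ) else 0)
        - (∑ n ∈ Finset.range (2 * M), if (n + 1) % 2 = 0 ∧ ω n = 0 then (1 : ℤ) else 0)))
      = (q ^ (M * (M + 1)))⁻¹ * weight q (2 * M) ω := by
  induction M with
  | zero => simp [weight]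
  | succ M ih =>
    have m1 : (2 * M + 1) % 2 = 1 := by lia
    have m2 : (2 * M + 1 + 1) % 2 = 0 := by lia
    have hw : weight q (2 * (M + 1)) ω = weight q (2 * M) ω *
        (2 * q ^ ((2 * M + 1) * ω (2 * M)) * if ω (2 * M) = 0 then 1 / 4 else 1) *
        (2 * q ^ ((2 * M + 2) * ω (2 * M + 1)) * if ω (2 * M + 1) = 0 then 1 / 4 else 1) := by
      rw [weight, show 2 * (M + 1) = 2 * M + 1 + 1 by ring, Finset.prod_range_succ,
        Finset.prod_range_succ, weight]
    rw [hw, show 2 * (M + 1) = 2 * M + 1 + 1 by ring]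
    simp only [Finset.sum_range_succ, m1, m2, if_true, one_ne_zero, zero_ne_one, if_false,
      false_and, true_and, add_zero]
    set a := ∑ n ∈ Finset.range (2 * M), (if (n + 1) % 2 = 1 then ((n : ℤ) + 1) * (ω n : ℤ)
             else ((n : ℤ) + 1) * ((ω n : ℤ) - 1))
    set b := ∑ n ∈ Finset.range (2 * M), if (n + 1) % 2 = 1 ∧ 1 ≤ ω n then (1 : ℤ) else 0
    set c := ∑ n ∈ Finset.range (2 * M), if (n + 1) % 2 = 0 ∧ ω n = 0 then (1 : ℤ) else 0
    have hA : q ^ (a + ((2 * M : ℕ) + 1) * (ω (2 * M) : ℤ)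
        + (((2 * M + 1 : ℕ) : ℤ) + 1) * ((ω (2 * M + 1) : ℤ) - 1))
        = q ^ a * q ^ ((2 * M + 1) * ω (2 * M)) * q ^ ((2 * M + 2) * ω (2 * M + 1))
          * (q ^ (2 * M + 2))⁻¹ := by
      simp only [← zpow_natCast, ← zpow_neg, ← zpow_add₀ hq0.ne']
      congr 1; push_cast; ring
    have hB : (2 : ℝ) ^ (2 * (b + (if 1 ≤ ω (2 * M) then (1 : ℤ) else 0)
        - (c + if ω (2 * M + 1) = 0 then (1 : ℤ) else 0)))
        = 2 ^ (2 * (b - c)) * (2 * if ω (2 * M) = 0 then 1 / 4 else 1) *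
          (2 * if ω (2 * M + 1) = 0 then 1 / 4 else 1) := by
      have hsplit : ∀ x y : ℤ, (2 : ℝ) ^ (2 * (b + x - (c + y)))
          = 2 ^ (2 * (b - c)) * 2 ^ (2 * x - 2 * y) := fun x y => by
        rw [← zpow_add₀ two_ne_zero]; congr 1; ring
      rw [hsplit]
      rcases Nat.eq_zero_or_pos (ω (2 * M)) with h | h <;>
      rcases Nat.eq_zero_or_pos (ω (2 * M + 1)) with h' | h'
      · simp [h, h', zpow_neg]; norm_num [zpow_ofNat]; ring
      · simp [h, h'.ne']; ring
      · simp [h.ne', h', Nat.one_le_iff_ne_zero]; ring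
      · simp [h.ne', h'.ne', Nat.one_le_iff_ne_zero]; norm_num [zpow_ofNat, mul_assoc]
    rw [hA, hB]
    have hq : (q ^ ((M + 1) * (M + 1 + 1)))⁻¹ = (q ^ (M * (M + 1)))⁻¹ * (q ^ (2 * M + 2))⁻¹ := by
      rw [← mul_inv, ← pow_add]; congr 2; ring
    rw [hq]
    linear_combination (q ^ ((2 * M + 1) * ω (2 * M)) * q ^ ((2 * M + 2) * ω (2 * M + 1))
      * (q ^ (2 * M + 2))⁻¹ * (2 * if ω (2 * M) = 0 then 1 / 4 else 1) *
          (2 * if ω (2 * M + 1) = 0 then 1 / 4 else 1)) * ih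

/-- The factor `q ^ (M (M + 1))` is the weight of the pairs of the ground state. -/
lemma summand_eq {q : ℝ} (hq0 : 0 < q) {M : ℕ} {ω : ℕ → ℕ} (hω : ω ∈ gapSet (2 * M)) :
    summand q ω = (q ^ (M * (M + 1)))⁻¹ * weight q (2 * M) ω := by
  have h3 : ∀ n ∉ Finset.range (2 * M), ω n = if (n + 1) % 2 = 0 then 1 else 0 :=
    fun n hn => hω.2.2 n (by simpa using hn)
  rw [summand, Afun, Bfun, ← summand_eq_aux hq0,
    finsum_eq_sum_of_support_subset (s := Finset.range (2 * M)),
    finsum_eq_sum_of_support_subset (s := Finset.range (2 * M)),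
    finsum_eq_sum_of_support_subset (s := Finset.range (2 * M))]
  all_goals
    refine Function.support_subset_iff'.2 fun n hn => ?_
    have := h3 n hn
    rcases Nat.mod_two_eq_zero_or_one (n + 1) with h | h <;> simp [this, h]

lemma summand_nonneg {q : ℝ} (hq0 : 0 < q) (ω : ℕ → ℕ) : 0 ≤ summand q ω := by
  unfold summand; positivity

section

variable {s : ℝ} (hs0 : 0 < s) (hs1 : s < 1)
include hs0 hs1

lemma hasSum_summand_gapSet (M : ℕ) :
    HasSum ((gapSet (2 * M)).indicator (summand (s ^ 2)))
      (((s ^ 2) ^ (M * (M + 1)))⁻¹ * convCoeff s (2 * M : ℕ)) := by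
  refine hasSum_subtype_iff_indicator.1 ?_
  refine ((hasSum_weight hs0 hs1 (2 * M)).mul_left _).congr_fun fun ω => ?_
  exact summand_eq (by positivity) ω.2

lemma summable_sq : Summable fun k : ℤ => (s ^ 2) ^ (k * k) := by
  have hq0 : 0 < s ^ 2 := by positivity
  have hq1 : s ^ 2 < 1 := pow_lt_one₀ hs0.le hs1 two_ne_zero
  refine (summable_theta hq0 hq1 (inv_pos.2 hq0)).congr fun k => ?_
  rw [inv_zpow', ← zpow_add₀ hq0.ne']
  congr 1; ring

lemma tendsto_convCoeff :
    Tendsto (fun M : ℕ => ((s ^ 2) ^ (M * (M + 1)))⁻¹ * convCoeff s (2 * M : ℕ)) atTop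
      (𝓝 (((eulerInf (s ^ 2))⁻¹ * (eulerInf (s ^ 2))⁻¹) * ∑' k : ℤ, (s ^ 2) ^ (k * k))) := by
  have hq0 : 0 < s ^ 2 := by positivity
  have hq1 : s ^ 2 < 1 := pow_lt_one₀ hs0.le hs1 two_ne_zero
  have hE := eulerInf_pos hq0 hq1
  have hsum : ∀ M : ℕ, ((s ^ 2) ^ (M * (M + 1)))⁻¹ * convCoeff s (2 * M : ℕ)
      = ∑' k : ℤ, (recip (s ^ 2) (M + k) * recip (s ^ 2) (M - k)) * (s ^ 2) ^ (k * k) := by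
    intro M
    have h := ((Equiv.addLeft (M : ℤ)).hasSum_iff.2 (convCoeff_hasSum s (2 * M : ℕ))).mul_left
      ((s ^ 2) ^ (M * (M + 1)))⁻¹
    rw [← h.tsum_eq]
    refine tsum_congr fun k => ?_
    simp only [Function.comp_apply, Equiv.coe_addLeft, eCoeff]
    rw [show ((2 * M : ℕ) : ℤ) - (M + k) = M - k by push_cast; ring]
    have hz : (s ^ 2) ^ (k * k) = ((s ^ 2) ^ (M * (M + 1)))⁻¹ *
        (s ^ (((M : ℤ) + k) * (M + k + 1)) * s ^ (((M : ℤ) - k) * (M - k + 1))) := by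
      simp only [← zpow_natCast, ← zpow_neg, ← zpow_add₀ hs0.ne', ← zpow_mul]
      congr 1; push_cast; ring
    rw [hz]
    ring
  simp only [hsum, ← tsum_mul_left]
  refine tendsto_tsum_of_dominated_convergence
    (bound := fun k => ((eulerInf (s ^ 2))⁻¹ * (eulerInf (s ^ 2))⁻¹) * (s ^ 2) ^ (k * k))
    ((summable_sq hs0 hs1).mul_left _) (fun k => ?_) (Eventually.of_forall fun M k => ?_)
  · exact ((tendsto_recip hq0 hq1 k).mul (tendsto_recip hq0 hq1 (-k))).mul_const _
  · have hn := mul_nonneg (recip_nonneg hq0 hq1 (M + k)) (recip_nonneg hq0 hq1 (M - k))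
    rw [Real.norm_of_nonneg (by positivity)]
    refine mul_le_mul_of_nonneg_right ?_ (by positivity)
    exact mul_le_mul (recip_le hq0 hq1 (M + k)) (recip_le hq0 hq1 (M - k))
      (recip_nonneg hq0 hq1 _) (inv_nonneg.2 hE.le)

/-- `S_even(q, 2) = (q; q)_∞⁻² ∑_k q^(k^2)`: the sets `gapSet (2 * M)` exhaust `He`. -/
lemma seven_eq : Seven (s ^ 2) 2
    = ((eulerInf (s ^ 2))⁻¹ * (eulerInf (s ^ 2))⁻¹) * ∑' k : ℤ, (s ^ 2) ^ (k * k) := by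
  have hq0 : 0 < s ^ 2 := by positivity
  refine HasSum.tsum_eq (f := summand (s ^ 2) ∘ ((↑) : He → ℕ → ℕ)) ?_
  rw [hasSum_subtype_iff_indicator]
  have hnn : ∀ t : Set (ℕ → ℕ), ∀ ω, 0 ≤ t.indicator (summand (s ^ 2)) ω := fun t =>
    Set.indicator_nonneg fun ω _ => summand_nonneg hq0 ω
  refine hasSum_of_isLUB_of_nonneg _ (hnn He) ⟨?_, fun b hb => ?_⟩
  · rintro _ ⟨F, rfl⟩
    refine ge_of_tendsto (tendsto_convCoeff hs0 hs1) ?_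
    have hF : ∀ᶠ M : ℕ in atTop, ∀ ω ∈ F, ω ∈ He → ω ∈ gapSet (2 * M) := by
      rw [Filter.eventually_all_finset]
      intro ω _
      by_cases h : ω ∈ He
      · exact (eventually_mem_gapSet h).mono fun M hM _ => hM
      · exact Eventually.of_forall fun M h' => absurd h' h
    filter_upwards [hF] with M hM
    refine le_trans (Finset.sum_le_sum fun ω hω => ?_)
      (sum_le_hasSum F (fun ω _ => hnn _ ω) (hasSum_summand_gapSet hs0 hs1 M))
    by_cases h : ω ∈ He
    · rw [Set.indicator_of_mem h, Set.indicator_of_mem (hM ω hω h)]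
    · rw [Set.indicator_of_notMem h]
      exact hnn _ ω
  · refine le_of_tendsto' (tendsto_convCoeff hs0 hs1) fun M => ?_
    refine hasSum_le_of_sum_le (hasSum_summand_gapSet hs0 hs1 M) fun F => ?_
    refine le_trans (Finset.sum_le_sum fun ω _ => ?_) (hb ⟨F, rfl⟩)
    exact Set.indicator_le_indicator_of_subset (gapSet_subset_He M)
      (fun ω => summand_nonneg hq0 ω) ω

/-! ### The even part of the squared theta series -/

lemma theta_sq_add {z : ℝ} (hz : z ≠ 0) :
    (∑' n : ℤ, s ^ (n * (n + 1)) * z ^ n) ^ 2 + (∑' n : ℤ, s ^ (n * (n + 1)) * (-z) ^ n) ^ 2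
      = 2 * ((∑' k : ℤ, (s ^ 2) ^ (k * k)) *
          ∑' l : ℤ, (s ^ 2) ^ (l * (l + 1)) * z ^ (2 * l)) := by
  have hq0 : 0 < s ^ 2 := by positivity
  have hq1 : s ^ 2 < 1 := pow_lt_one₀ hs0.le hs1 two_ne_zero
  have n1 := summable_norm_theta hs0 hs1 hz
  have n2 := summable_norm_theta hs0 hs1 (neg_ne_zero.2 hz)
  have n3 : Summable fun l : ℤ => (s ^ 2) ^ (l * (l + 1)) * z ^ (2 * l) := by
    refine (summable_theta hq0 hq1 (by positivity : (0 : ℝ) < z ^ 2)).congr fun l => ?_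
    rw [← zpow_natCast z 2, ← zpow_mul]; rfl
  have n3' : Summable fun l : ℤ => ‖(s ^ 2) ^ (l * (l + 1)) * z ^ (2 * l)‖ := n3.norm
  have n4' : Summable fun k : ℤ => ‖(s ^ 2) ^ (k * k)‖ := (summable_sq hs0 hs1).norm
  rw [sq, sq, tsum_mul_tsum_of_summable_norm n1 n1, tsum_mul_tsum_of_summable_norm n2 n2,
    ← (summable_mul_of_summable_norm n1 n1).tsum_add (summable_mul_of_summable_norm n2 n2),
    tsum_mul_tsum_of_summable_norm n4' n3', ← tsum_mul_left]
  -- The terms with `n + m` odd cancel; the others are parametrised by `n = l + k`, `m = l - k`.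
  have hinj : Function.Injective fun x : ℤ × ℤ => (x.2 + x.1, x.2 - x.1) := by
    rintro ⟨a, b⟩ ⟨c, d⟩ h
    simp only [Prod.mk.injEq] at h ⊢
    lia
  rw [← hinj.tsum_eq]
  · refine tsum_congr fun x => ?_
    obtain ⟨k, l⟩ := x
    have e1 : s ^ ((l + k) * (l + k + 1)) * s ^ ((l - k) * (l - k + 1))
        = (s ^ 2) ^ (k * k) * (s ^ 2) ^ (l * (l + 1)) := by
      simp only [← zpow_natCast, ← zpow_add₀ hs0.ne', ← zpow_mul]
      congr 1; push_cast; ring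
    have e2 : ∀ w : ℝ, w ≠ 0 → w ^ (l + k) * w ^ (l - k) = w ^ (2 * l) := fun w hw => by
      rw [← zpow_add₀ hw]; congr 1; ring
    have e3 := e2 (-z) (neg_ne_zero.2 hz)
    rw [(even_two_mul l).neg_zpow] at e3
    have e4 := e2 z hz
    simp only
    linear_combination (z ^ (l + k) * z ^ (l - k) + (-z) ^ (l + k) * (-z) ^ (l - k)) * e1
      + (s ^ 2) ^ (k * k) * (s ^ 2) ^ (l * (l + 1)) * (e3 + e4)
  · intro x hx
    obtain ⟨n, m⟩ := x
    rcases Int.even_or_odd (n + m) with h | h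
    · obtain ⟨l, hl⟩ := h
      exact ⟨(n - l, l), by simp only [Prod.mk.injEq]; lia⟩
    · refine absurd ?_ hx
      have : (-z) ^ n * (-z) ^ m = -(z ^ n * z ^ m) := by
        rw [← zpow_add₀ (neg_ne_zero.2 hz), ← zpow_add₀ hz, h.neg_zpow]
      linear_combination (s ^ (n * (n + 1)) * s ^ (m * (m + 1))) * this

end

end EvenTheta

theorem statement7 (q z : ℝ) (hq0 : 0 < q) (hq1 : q < 1) (hz : 0 < z) :
    Summable (fun ℓ : ℤ => q ^ (ℓ * (ℓ + 1)) * z ^ (2 * ℓ)) ∧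
    Multipliable (fun i : ℕ => ((1 + q ^ (i + 1) * z) * (1 + q ^ i * z⁻¹)) ^ 2) ∧
    Multipliable (fun i : ℕ => ((1 - q ^ (i + 1) * z) * (1 - q ^ i * z⁻¹)) ^ 2) ∧
    2 * Seven q 2 * (∑' ℓ : ℤ, q ^ (ℓ * (ℓ + 1)) * z ^ (2 * ℓ)) =
      (∏' i : ℕ, ((1 + q ^ (i + 1) * z) * (1 + q ^ i * z⁻¹)) ^ 2) +
      (∏' i : ℕ, ((1 - q ^ (i + 1) * z) * (1 - q ^ i * z⁻¹)) ^ 2) := by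
  obtain ⟨s, hs0, rfl⟩ : ∃ s : ℝ, 0 < s ∧ s ^ 2 = q :=
    ⟨√q, Real.sqrt_pos.2 hq0, Real.sq_sqrt hq0.le⟩
  have hs1 : s < 1 := by nlinarith
  have hneg : ∀ i : ℕ, (1 - (s ^ 2) ^ (i + 1) * z) * (1 - (s ^ 2) ^ i * z⁻¹)
      = (1 + (s ^ 2) ^ (i + 1) * (-z)) * (1 + (s ^ 2) ^ i * (-z)⁻¹) := fun i => by
    rw [inv_neg]; ring
  simp only [hneg]
  have m1 := EvenTheta.multipliable_triple hs0 hs1 z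
  have m2 := EvenTheta.multipliable_triple hs0 hs1 (-z)
  refine ⟨?_, m1.pow 2, m2.pow 2, ?_⟩
  · refine (EvenTheta.summable_theta hq0 hq1 (pow_pos hz 2)).congr fun l => ?_
    rw [← zpow_natCast z 2, ← zpow_mul]; rfl
  · rw [m1.tprod_pow, m2.tprod_pow, EvenTheta.triple_product hs0 hs1 hz.ne',
      EvenTheta.triple_product hs0 hs1 (neg_ne_zero.2 hz.ne'), EvenTheta.seven_eq hs0 hs1]
    linear_combination -(EvenTheta.eulerInf (s ^ 2))⁻¹ ^ 2 *
      EvenTheta.theta_sq_add hs0 hs1 hz.ne'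
end
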